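/- arXiv:2311.18227 — 6 statements merged into one kernel-verified Lean document; each statement's English description precedes it below -/
import Mathlib

section
/- Let a_{n,k} = |S_{n,k}^{1≺n}(1324)|. For all k ≥ 1 and n ≥ k+1, a_{n,k} equals the sum, over all k-tuples (m₁,…,m_k) of integers with each mᵢ ≥ 2 and m₁ + ⋯ + m_k = n + k − 1, of the products a_{m₁,1} · a_{m₂,1} ⋯ a_{m_k,1}. (Equivalently, every permutation in S_{n,k}^{1≺n}(1324) decomposes uniquely as a product of k primitives.) -/
/-- A permutation of `{1,…,n}` (encoded as `Equiv.Perm (Fin n)` with 0-based values)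
avoids the pattern 1324 if there are no indices `i < j < k < l` with
`σ i < σ k < σ j < σ l`. -/
def Avoids1324 {n : ℕ} (σ : Equiv.Perm (Fin n)) : Prop :=
  ¬ ∃ i j k l : Fin n, i < j ∧ j < k ∧ k < l ∧ σ i < σ k ∧ σ k < σ j ∧ σ j < σ l

/-- The set `S_{n,k}^{a ≺ n}(1324)`: 1324-avoiding permutations with the entry `a`
exactly `k` places to the left of the entry `n`, and the entries `1, …, a-1` all to
the right of `n`.  (Values are 0-based: the entry `a` is `⟨a-1, _⟩`.) -/
def SPerm (n a k : ℕ) : Set (Equiv.Perm (Fin n)) :=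
  {σ | Avoids1324 σ ∧ ∃ hn : n - 1 < n, ∃ ha : a - 1 < n,
    ((σ.symm ⟨n - 1, hn⟩ : Fin n) : ℕ) = ((σ.symm ⟨a - 1, ha⟩ : Fin n) : ℕ) + k ∧
    ∀ b : Fin n, (b : ℕ) + 1 < a → σ.symm ⟨n - 1, hn⟩ < σ.symm b}


def AvL (l : List ℕ) : Prop :=
  ∀ w x y z : ℕ, [w, x, y, z].Sublist l → w < y → y < x → x < z → False

def jn (lo hi : ℕ) (t : List ℕ × List ℕ × List ℕ) : List ℕ :=
  t.1 ++ lo :: (t.2.1 ++ hi :: t.2.2)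

def TT (lo hi k : ℕ) : Set (List ℕ × List ℕ × List ℕ) :=
  {t | t.2.1.length + 1 = k ∧ (jn lo hi t).Nodup ∧ (∀ x, x ∈ jn lo hi t ↔ lo ≤ x ∧ x ≤ hi) ∧
    AvL (jn lo hi t)}

lemma AvL.mono {l l' : List ℕ} (h : AvL l) (hs : l'.Sublist l) : AvL l' :=
  fun w x y z hw => h w x y z (hw.trans hs)

lemma split_inj {x : ℕ} {A C A' C' : List ℕ} (h : A ++ x :: C = A' ++ x :: C')
    (hA : x ∉ A) (hA' : x ∉ A') : A = A' ∧ C = C' := by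
  induction A generalizing A' with
  | nil =>
    cases A' with
    | nil => simpa using h
    | cons a A' => simp at h hA'; exact absurd h.1 hA'.1
  | cons a A ih =>
    cases A' with
    | nil => simp at h hA; exact absurd h.1.symm hA.1
    | cons a' A' =>
      simp at h hA hA'
      obtain ⟨h1, h2⟩ := ih h.2 hA.2 hA'.2
      simp [h.1, h1, h2]

lemma jn_injOn (lo hi k : ℕ) : Set.InjOn (jn lo hi) (TT lo hi k) := by
  rintro ⟨A, B, C⟩ h ⟨A', B', C'⟩ h' e
  have h1 := h.2.1
  have h2 := h'.2.1
  simp only [jn] at e h1 h2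
  have n1 : lo ∉ A := by
    intro hh
    exact (List.disjoint_of_nodup_append h1) hh (by simp)
  have n2 : lo ∉ A' := by
    intro hh
    exact (List.disjoint_of_nodup_append h2) hh (by simp)
  obtain ⟨rfl, e2⟩ := split_inj e n1 n2
  have m1 : hi ∉ B := by
    intro hh
    exact (List.disjoint_of_nodup_append (List.nodup_cons.1 (List.Nodup.of_append_right h1)).2) hh (by simp)
  have m2 : hi ∉ B' := by
    intro hh
    exact (List.disjoint_of_nodup_append (List.nodup_cons.1 (List.Nodup.of_append_right h2)).2) hh (by simp)
  obtain ⟨rfl, rfl⟩ := split_inj e2 m1 m2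
  rfl

lemma TT_finite (lo hi k : ℕ) : (TT lo hi k).Finite := by
  apply Set.Finite.of_finite_image _ (jn_injOn lo hi k)
  apply Set.Finite.subset (List.finite_toSet (List.range' lo (hi + 1 - lo)).permutations)
  rintro _ ⟨t, ht, rfl⟩
  simp only [Set.mem_ofPred_eq, List.mem_permutations]
  rw [List.perm_ext_iff_of_nodup ht.2.1 List.nodup_range']
  intro x
  rw [ht.2.2.1, List.mem_range'_1]
  omega

/-- shift -/
def sh (c : ℕ) (t : List ℕ × List ℕ × List ℕ) : List ℕ × List ℕ × List ℕ :=
  (t.1.map (· + c), t.2.1.map (· + c), t.2.2.map (· + c))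

lemma jn_sh (lo hi c : ℕ) (t) : jn (lo + c) (hi + c) (sh c t) = (jn lo hi t).map (· + c) := by
  simp [jn, sh]

lemma AvL_map (c : ℕ) (l : List ℕ) : AvL (l.map (· + c)) ↔ AvL l := by
  constructor
  · intro h w x y z hs h1 h2 h3
    exact h (w + c) (x + c) (y + c) (z + c) (by simpa using hs.map (· + c)) (by omega) (by omega)
      (by omega)
  · intro h w x y z hs h1 h2 h3
    obtain ⟨l', hl', e⟩ := List.sublist_map_iff.1 hs
    match l', hl', e with
    | [w', x', y', z'], hl', e =>
      simp at e
      exact h w' x' y' z' hl' (by omega) (by omega) (by omega)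

lemma sh_mem (lo hi k c : ℕ) (t) : sh c t ∈ TT (lo + c) (hi + c) k ↔ t ∈ TT lo hi k := by
  have inj : Function.Injective (fun x : ℕ => x + c) := fun a b h => by simpa using h
  simp only [TT, Set.mem_ofPred_eq, jn_sh, AvL_map, List.nodup_map_iff inj]
  have : (∀ x, x ∈ (jn lo hi t).map (· + c) ↔ lo + c ≤ x ∧ x ≤ hi + c) ↔
      ∀ x, x ∈ jn lo hi t ↔ lo ≤ x ∧ x ≤ hi := by
    constructor
    · intro h x
      have := h (x + c)
      simpa using this
    · intro h x
      simp only [List.mem_map, h]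
      constructor
      · rintro ⟨a, ha, rfl⟩; omega
      · intro hx; exact ⟨x - c, by omega, by omega⟩
  rw [this]
  simp [sh]

lemma map_sub_add (c : ℕ) (l : List ℕ) (h : ∀ x ∈ l, c ≤ x) :
    (l.map (· - c)).map (· + c) = l := by
  rw [List.map_map]
  conv_rhs => rw [← List.map_id l]
  apply List.map_congr_left
  intro a ha
  have := h a ha
  simp; omega

lemma TT_shift (lo hi k c : ℕ) : (TT (lo + c) (hi + c) k).ncard = (TT lo hi k).ncard := by
  have inj : Function.Injective (fun x : ℕ => x + c) := fun a b h => by simpa using h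
  have inj' : Function.Injective (sh c) := by
    rintro ⟨A, B, C⟩ ⟨A', B', C'⟩ e
    simp only [sh, Prod.mk.injEq] at e
    have i := List.map_injective_iff.2 inj
    simp only [Prod.mk.injEq]
    exact ⟨i e.1, i e.2.1, i e.2.2⟩
  rw [← Set.ncard_image_of_injective (TT lo hi k) inj']
  congr 1
  ext t
  constructor
  · intro ht
    have hm := ht.2.2.1
    have e : sh c (t.1.map (· - c), t.2.1.map (· - c), t.2.2.map (· - c)) = t := by
      obtain ⟨A, B, C⟩ := t
      simp only [jn] at hm
      simp only [sh]
      rw [map_sub_add, map_sub_add, map_sub_add]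
      all_goals
        intro x hx
        have := (hm x).1 (by simp [hx])
        omega
    refine ⟨_, ?_, e⟩
    rw [← sh_mem lo hi k c, e]; exact ht
  · rintro ⟨s, hs, rfl⟩
    exact (sh_mem ..).2 hs

def glue (b : ℕ) (s t : List ℕ × List ℕ × List ℕ) : List ℕ × List ℕ × List ℕ :=
  (t.1 ++ s.1, b :: t.2.1, t.2.2 ++ s.2.2)

lemma drop_left {a : ℕ} {t P M : List ℕ} (h : (a :: t).Sublist (P ++ M)) (ha : a ∉ P) :
    (a :: t).Sublist M := by
  induction P with
  | nil => simpa using h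
  | cons p P ih =>
    simp at ha
    rw [List.cons_append, List.cons_sublist_cons'] at h
    rcases h with h | h
    · exact ih h ha.2
    · exact absurd h.1 ha.1

lemma drop_right {a : ℕ} {t P M : List ℕ} (h : (t ++ [a]).Sublist (M ++ P)) (ha : a ∉ P) :
    (t ++ [a]).Sublist M := by
  have := h.reverse
  simp at this
  have := drop_left this (by simpa using ha)
  have := this.reverse
  simpa using this

lemma glue_avoid {b : ℕ} {P Q R S : List ℕ} (hP : ∀ x ∈ P, b < x) (hQ : ∀ x ∈ Q, x < b)
    (hR : ∀ x ∈ R, b < x) (hS : ∀ x ∈ S, x < b)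
    (h1 : AvL (Q ++ b :: S)) (h2 : AvL (P ++ b :: R)) : AvL (P ++ (Q ++ (b :: R ++ S))) := by
  have f1 : (P ++ (Q ++ (b :: R ++ S))).filter (· ≤ b) = Q ++ b :: S := by
    have e1 : P.filter (· ≤ b) = [] := by simpa using hP
    have e2 : R.filter (· ≤ b) = [] := by simpa using hR
    have e3 : Q.filter (· ≤ b) = Q := by simpa using fun x hx => (hQ x hx).le
    have e4 : S.filter (· ≤ b) = S := by simpa using fun x hx => (hS x hx).le
    simp [e1, e2, e3, e4]
  have f2 : (P ++ (Q ++ (b :: R ++ S))).filter (b ≤ ·) = P ++ b :: R := by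
    have e1 : Q.filter (b ≤ ·) = [] := by simpa using hQ
    have e2 : S.filter (b ≤ ·) = [] := by simpa using hS
    have e3 : P.filter (b ≤ ·) = P := by simpa using fun x hx => (hP x hx).le
    have e4 : R.filter (b ≤ ·) = R := by simpa using fun x hx => (hR x hx).le
    simp [e1, e2, e3, e4]
  intro w x y z hs hwy hyx hxz
  rcases Nat.lt_or_ge b z with hz | hz
  swap
  · apply h1 w x y z _ hwy hyx hxz
    rw [← f1]
    have := hs.filter (· ≤ b)
    have e : [w, x, y, z].filter (· ≤ b) = [w, x, y, z] := by
      simp; omega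
    rwa [e] at this
  rcases Nat.lt_or_ge w b with hw | hw
  swap
  · apply h2 w x y z _ hwy hyx hxz
    rw [← f2]
    have := hs.filter (b ≤ ·)
    have e : [w, x, y, z].filter (b ≤ ·) = [w, x, y, z] := by
      simp; omega
    rwa [e] at this
  have hs := drop_left hs (fun h => by have := hP w h; omega)
  rw [← List.append_assoc] at hs
  have hs := drop_right (t := [w, x, y]) hs (fun h => by have := hS z h; omega)
  simp only [List.cons_append, List.nil_append] at hs
  have hR' : ∀ x ∈ b :: R, b ≤ x := by
    intro x hx
    rcases List.mem_cons.1 hx with h | h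
    · omega
    · exact (hR x h).le
  obtain ⟨l1, l2, e, s1, s2⟩ := List.sublist_append_iff.1 hs
  match l1, e, s1 with
  | [], e, s1 =>
    simp at e; subst e
    have := hR' w (s2.subset (by simp))
    omega
  | [w'], e, s1 =>
    simp at e
    obtain ⟨rfl, rfl⟩ := e
    have hy := hR' y (s2.subset (by simp))
    rw [List.cons_sublist_cons'] at s2
    have s3 : [x, y, z].Sublist R := by
      rcases s2 with h | h
      · exact h
      · omega
    have hy := hR y (s3.subset (by simp))
    exact h2 b x y z ((List.Sublist.cons_cons b s3).trans (List.sublist_append_right _ _)) hy hyx hxz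
  | [w', x'], e, s1 =>
    simp at e
    obtain ⟨rfl, rfl, rfl⟩ := e
    have := hR' y (s2.subset (by simp))
    have := hQ x (s1.subset (by simp))
    omega
  | [w', x', y'], e, s1 =>
    simp at e
    obtain ⟨rfl, rfl, rfl, rfl⟩ := e
    have := hQ x (s1.subset (by simp))
    refine h1 w x y b ?_ hwy hyx this
    exact List.Sublist.append (l₁ := [w, x, y]) (r₁ := [b]) s1 (by simp)
  | [w', x', y', z'], e, s1 =>
    simp at e
    obtain ⟨rfl, rfl, rfl, rfl, rfl⟩ := e
    have := hQ z (s1.subset (by simp))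
    omega
  | _ :: _ :: _ :: _ :: _ :: _, e, s1 =>
    simp at e

lemma split_filter {b : ℕ} {A : List ℕ} (hb : b ∉ A)
    (h : ∀ a a', [a, a'].Sublist A → a < b → b < a' → False) :
    A = A.filter (b < ·) ++ A.filter (· < b) := by
  induction A with
  | nil => simp
  | cons a A ih =>
    simp at hb
    have ih := ih hb.2 (fun u v hs => h u v (hs.cons a))
    rcases Nat.lt_or_gt_of_ne hb.1 with hab | hab
    · simp only [List.filter_cons]
      simp [hab, hab.le.not_gt, ← ih]
    · have hA : ∀ x ∈ A, x < b := by
        intro x hx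
        by_contra hh
        have : x ≠ b := fun e => hb.2 (e ▸ hx)
        exact h a x (by simpa using hx) hab (by omega)
      have e1 : A.filter (b < ·) = [] := by simpa using fun x hx => (hA x hx).le
      have e2 : A.filter (· < b) = A := by simpa using hA
      simp only [List.filter_cons]
      simp [hab, hab.le.not_gt, e1, e2]


lemma glue_jn (b N : ℕ) (A1 C1 A B C : List ℕ) :
    jn 0 N (glue b (A1, [], C1) (A, B, C)) =
      A ++ ((A1 ++ [0]) ++ (b :: (B ++ N :: C) ++ C1)) := by
  simp [jn, glue]

lemma TT_one {b : ℕ} {s} (h : s ∈ TT 0 b 1) : ∃ A1 C1, s = (A1, [], C1) ∧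
    0 < b ∧ (∀ x ∈ A1, 0 < x ∧ x < b) ∧ (∀ x ∈ C1, 0 < x ∧ x < b) := by
  obtain ⟨A, B, C⟩ := s
  obtain ⟨h1, h2, h3, h4⟩ := h
  simp at h1
  subst h1
  simp [jn, List.nodup_append] at h2 h3
  refine ⟨A, C, rfl, ?_, ?_, ?_⟩
  · grind
  · intro x hx
    have := h3 x
    have := h2.2.2 x hx
    grind
  · intro x hx
    have := h3 x
    grind

lemma TT_bounds {lo hi k : ℕ} {A B C} (h : (A, B, C) ∈ TT lo hi k) :
    lo < hi ∧ (∀ x ∈ A, lo < x ∧ x < hi) ∧ (∀ x ∈ B, lo < x ∧ x < hi) ∧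
      (∀ x ∈ C, lo < x ∧ x < hi) := by
  obtain ⟨h1, h2, h3, h4⟩ := h
  simp [jn, List.nodup_append] at h2 h3
  refine ⟨?_, ?_, ?_, ?_⟩
  · have := h3 lo
    grind
  all_goals
    intro x hx
    have := h3 x
    grind

lemma glue_mem {b N k : ℕ} {s t} (hs : s ∈ TT 0 b 1) (ht : t ∈ TT b N k) :
    glue b s t ∈ TT 0 N (k + 1) := by
  obtain ⟨A1, C1, rfl, hb, hA1, hC1⟩ := TT_one hs
  obtain ⟨A, B, C⟩ := t
  obtain ⟨hbN, hA, hB, hC⟩ := TT_bounds ht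
  obtain ⟨s1, s2, s3, s4⟩ := hs
  obtain ⟨t1, t2, t3, t4⟩ := ht
  have hp : (jn 0 N (glue b (A1, [], C1) (A, B, C))).Perm ((A1 ++ 0 :: C1) ++ jn b N (A, B, C)) := by
    rw [List.perm_iff_count]
    intro a
    simp [jn, glue, List.count_cons]
    omega
  refine ⟨by simpa [glue] using t1, ?_, ?_, ?_⟩
  · rw [hp.nodup_iff, List.nodup_append]
    refine ⟨?_, t2, ?_⟩
    · exact List.Nodup.sublist (by simp [jn]) s2
    · intro x hx y hy
      have := (t3 y).1 hy
      simp at hx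
      grind
  · intro x
    rw [hp.mem_iff, List.mem_append, t3]
    have := s3 x
    simp [jn] at this ⊢
    grind
  · rw [glue_jn]
    apply glue_avoid
    · exact fun x hx => (hA x hx).1
    · intro x hx
      simp at hx
      grind
    · intro x hx
      simp at hx
      grind
    · exact fun x hx => (hC1 x hx).2
    · simpa [jn] using s4
    · simpa [jn] using t4

lemma glue_inj {b b' N k : ℕ} {s t s' t'} (hs : s ∈ TT 0 b 1) (ht : t ∈ TT b N k)
    (hs' : s' ∈ TT 0 b' 1) (ht' : t' ∈ TT b' N k) (e : glue b s t = glue b' s' t') :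
    b = b' ∧ s = s' ∧ t = t' := by
  obtain ⟨A1, C1, rfl, hb, hA1, hC1⟩ := TT_one hs
  obtain ⟨A, B, C⟩ := t
  obtain ⟨hbN, hA, hB, hC⟩ := TT_bounds ht
  obtain ⟨A1', C1', rfl, hb', hA1', hC1'⟩ := TT_one hs'
  obtain ⟨A', B', C'⟩ := t'
  obtain ⟨hbN', hA', hB', hC'⟩ := TT_bounds ht'
  simp only [glue, Prod.mk.injEq, List.cons.injEq] at e
  obtain ⟨e1, ⟨rfl, rfl⟩, e3⟩ := e
  have key : ∀ (P Q P' Q' : List ℕ), (∀ x ∈ P, b < x ∧ x < N) → (∀ x ∈ Q, 0 < x ∧ x < b) →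
      (∀ x ∈ P', b < x ∧ x < N) → (∀ x ∈ Q', 0 < x ∧ x < b) → P ++ Q = P' ++ Q' →
      P = P' ∧ Q = Q' := by
    intro P Q P' Q' h1 h2 h3 h4 e
    have f : ∀ (P Q : List ℕ), (∀ x ∈ P, b < x ∧ x < N) → (∀ x ∈ Q, 0 < x ∧ x < b) →
        (P ++ Q).filter (b < ·) = P := by
      intro P Q h1 h2
      have e1 : P.filter (b < ·) = P := by simpa using fun x hx => (h1 x hx).1
      have e2 : Q.filter (b < ·) = [] := by simpa using fun x hx => (h2 x hx).2.le
      simp [e1, e2]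
    have e1 : P = P' := by rw [← f P Q h1 h2, e, f P' Q' h3 h4]
    subst e1
    exact ⟨rfl, List.append_cancel_left e⟩
  obtain ⟨rfl, rfl⟩ := key _ _ _ _ hA hA1 hA' hA1' e1
  obtain ⟨rfl, rfl⟩ := key _ _ _ _ hC hC1 hC' hC1' e3
  simp

lemma glue_surj {N k : ℕ} (hk : 1 ≤ k) {u} (hu : u ∈ TT 0 N (k + 1)) :
    ∃ b ≤ N, ∃ s ∈ TT 0 b 1, ∃ t ∈ TT b N k, glue b s t = u := by
  obtain ⟨A, B', C⟩ := u
  obtain ⟨hN, hA, hB', hC⟩ := TT_bounds hu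
  obtain ⟨u1, u2, u3, u4⟩ := hu
  cases B' with
  | nil => simp at u1; omega
  | cons b B =>
  simp only [List.length_cons] at u1
  have hb := hB' b (by simp)
  have hu2 := u2
  simp [jn, List.nodup_append] at hu2
  have bA : b ∉ A := by grind
  have bC : b ∉ C := by grind
  have bB : b ∉ B := by grind
  have hB : ∀ x ∈ B, b < x := by
    intro x hx
    by_contra hh
    have hx' := hB' x (by simp [hx])
    have : x ≠ b := fun e => bB (e ▸ hx)
    refine u4 0 b x N ?_ (by omega) (by omega) (by omega)
    simp only [jn]
    refine List.Sublist.trans ?_ (List.sublist_append_right _ _)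
    refine List.Sublist.cons_cons _ (List.Sublist.cons_cons _ ?_)
    exact List.Sublist.append (l₁ := [x]) (r₁ := [N]) (by simpa using hx) (by simp)
  have eA := split_filter bA (by
    intro a a' hs h1 h2
    have ha' := hA a' (hs.subset (by simp))
    refine u4 a a' b N ?_ (by omega) (by omega) (by omega)
    simp only [jn]
    refine List.Sublist.append (l₁ := [a, a']) hs (List.Sublist.cons _ ?_)
    exact List.Sublist.cons_cons _ (by simp))
  have eC := split_filter bC (by
    intro a a' hs h1 h2
    have ha := hC a (hs.subset (by simp))
    refine u4 0 b a a' ?_ (by omega) (by omega) (by omega)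
    simp only [jn]
    refine List.Sublist.trans ?_ (List.sublist_append_right _ _)
    refine List.Sublist.cons_cons _ (List.Sublist.cons_cons _ ?_)
    exact List.Sublist.trans (List.Sublist.cons _ hs) (List.sublist_append_right _ _))
  have fB1 : B.filter (· ≤ b) = [] := by simpa using hB
  have fB2 : B.filter (b ≤ ·) = B := by simpa using fun x hx => (hB x hx).le
  have g1 : ∀ D : List ℕ, b ∉ D → D.filter (· ≤ b) = D.filter (· < b) := by
    intro D hD
    apply List.filter_congr
    intro x hx
    have : x ≠ b := fun e => hD (e ▸ hx)
    simp; omega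
  have g2 : ∀ D : List ℕ, b ∉ D → D.filter (b ≤ ·) = D.filter (b < ·) := by
    intro D hD
    apply List.filter_congr
    intro x hx
    have : x ≠ b := fun e => hD (e ▸ hx)
    simp; omega
  have j1 : jn 0 b (A.filter (· < b), [], C.filter (· < b)) =
      (jn 0 N (A, b :: B, C)).filter (· ≤ b) := by
    simp [jn, fB1, g1 A bA, g1 C bC, hb.2]
  have j2 : jn b N (A.filter (b < ·), B, C.filter (b < ·)) =
      (jn 0 N (A, b :: B, C)).filter (b ≤ ·) := by
    simp [jn, fB2, g2 A bA, g2 C bC, hb.2.le, hb.1.ne']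
  refine ⟨b, hb.2.le, (A.filter (· < b), [], C.filter (· < b)), ?_,
    (A.filter (b < ·), B, C.filter (b < ·)), ?_, ?_⟩
  · refine ⟨by simp, ?_, ?_, ?_⟩
    · rw [j1]; exact u2.filter _
    · intro x
      rw [j1, List.mem_filter, u3]
      simp; omega
    · rw [j1]; exact u4.mono List.filter_sublist
  · refine ⟨by simp; omega, ?_, ?_, ?_⟩
    · rw [j2]; exact u2.filter _
    · intro x
      rw [j2, List.mem_filter, u3]
      simp; omega
    · rw [j2]; exact u4.mono List.filter_sublist
  · simp only [glue]
    rw [← eA, ← eC]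

lemma TT_rec (N k : ℕ) (hk : 1 ≤ k) : (TT 0 N (k + 1)).ncard =
    ∑ p ∈ Finset.HasAntidiagonal.antidiagonal N, (TT 0 p.1 1).ncard * (TT 0 p.2 k).ncard := by
  have key : (TT 0 N (k + 1)).ncard = ∑ p ∈ Finset.HasAntidiagonal.antidiagonal N,
      (TT 0 p.1 1).ncard * (TT p.1 N k).ncard := by
    rw [Set.ncard_eq_toFinset_card _ (TT_finite _ _ _)]
    symm
    calc _ = ((Finset.HasAntidiagonal.antidiagonal N).sigma (fun p => (TT_finite 0 p.1 1).toFinset ×ˢ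
            (TT_finite p.1 N k).toFinset)).card := by
          rw [Finset.card_sigma]
          apply Finset.sum_congr rfl
          intro p _
          rw [Finset.card_product, Set.ncard_eq_toFinset_card _ (TT_finite _ _ _),
            Set.ncard_eq_toFinset_card _ (TT_finite _ _ _)]
      _ = _ := by
          refine Finset.card_bij (fun x _ => glue x.1.1 x.2.1 x.2.2) ?_ ?_ ?_
          · rintro ⟨⟨p, q⟩, s, t⟩ h
            simp at h ⊢
            exact glue_mem h.2.1 h.2.2
          · rintro ⟨⟨p, q⟩, s, t⟩ h ⟨⟨p', q'⟩, s', t'⟩ h' e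
            simp at h h' e
            obtain ⟨rfl, rfl, rfl⟩ := glue_inj h.2.1 h.2.2 h'.2.1 h'.2.2 e
            have : q = q' := by omega
            subst this
            rfl
          · intro u hu
            simp at hu
            obtain ⟨b, hb, s, hs, t, ht, e⟩ := glue_surj hk hu
            refine ⟨⟨(b, N - b), s, t⟩, ?_, e⟩
            simp [hs, ht]
            omega
  rw [key]
  apply Finset.sum_congr rfl
  rintro ⟨p, q⟩ h
  simp at h
  subst h
  have := TT_shift 0 q k p
  simp only
  rw [← this, zero_add, add_comm q p]

lemma TT_sum (k N : ℕ) : (TT 0 N (k + 1)).ncard =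
    ∑ d ∈ Finset.Nat.antidiagonalTuple (k + 1) N, ∏ i, (TT 0 (d i) 1).ncard := by
  induction k generalizing N with
  | zero => simp
  | succ k ih =>
    rw [TT_rec _ _ (by omega)]
    simp only [ih, Finset.mul_sum]
    rw [Finset.sum_sigma']
    refine Finset.sum_bij' (fun x _ => (Fin.cons x.1.1 x.2 : Fin (k + 2) → ℕ))
      (fun d _ => ⟨(d 0, N - d 0), Fin.tail d⟩) ?_ ?_ ?_ ?_ ?_
    · rintro ⟨⟨p, q⟩, d⟩ h
      simp [Finset.Nat.mem_antidiagonalTuple] at h ⊢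
      omega
    · intro d h
      rw [Finset.Nat.mem_antidiagonalTuple, Fin.sum_univ_succ] at h
      simp [Finset.Nat.mem_antidiagonalTuple, Fin.tail]
      omega
    · rintro ⟨⟨p, q⟩, d⟩ h
      simp [Finset.Nat.mem_antidiagonalTuple] at h ⊢
      omega
    · intro d h
      simp
    · rintro ⟨⟨p, q⟩, d⟩ h
      simp [Fin.prod_univ_succ]

lemma AvL_ofFn {n : ℕ} (σ : Equiv.Perm (Fin n)) :
    AvL (List.ofFn (fun i => (σ i : ℕ))) ↔ Avoids1324 σ := by
  have e : List.ofFn (fun i => (σ i : ℕ)) = (List.finRange n).map (fun i => (σ i : ℕ)) :=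
    List.ofFn_eq_map
  rw [e]
  constructor
  · rintro h ⟨i, j, k, l, h1, h2, h3, h4, h5, h6⟩
    refine h (σ i) (σ j) (σ k) (σ l) ?_ h4 h5 h6
    have : [i, j, k, l].Sublist (List.finRange n) := by
      rw [List.sublist_iff_exists_fin_orderEmbedding_get_eq]
      have hm : StrictMono (fun a : Fin 4 => (⟨(![i, j, k, l] a : Fin n), by simp⟩ :
          Fin (List.finRange n).length)) := by
        apply Fin.strictMono_iff_lt_succ.2
        intro a
        fin_cases a <;> simpa
      refine ⟨OrderEmbedding.ofStrictMono _ hm, ?_⟩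
      intro a
      change Fin 4 at a
      fin_cases a <;> simp
    simpa using this.map (fun i => (σ i : ℕ))
  · intro h w x y z hs h1 h2 h3
    obtain ⟨l', hl', e⟩ := List.sublist_map_iff.1 hs
    match l', hl', e with
    | [w', x', y', z'], hl', e =>
      simp at e
      obtain ⟨rfl, rfl, rfl, rfl⟩ := e
      have hp := (List.pairwise_lt_finRange n).sublist hl'
      simp at hp
      exact h ⟨w', x', y', z', hp.1.1, hp.2.1.1, hp.2.2, h1, h2, h3⟩

lemma SPerm_ncard (N k : ℕ) (hk : 1 ≤ k) : (SPerm (N + 1) 1 k).ncard = (TT 0 N k).ncard := by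
  have inj : Function.Injective (fun σ : Equiv.Perm (Fin (N + 1)) =>
      List.ofFn (fun i => (σ i : ℕ))) := by
    intro σ τ h
    have := List.ofFn_injective h
    ext i
    exact congrFun this i
  rw [← Set.ncard_image_of_injective _ inj, ← (jn_injOn 0 N k).ncard_image]
  congr 1
  ext l
  constructor
  · rintro ⟨σ, ⟨hav, hn, ha, hpos, -⟩, rfl⟩
    rw [← AvL_ofFn] at hav
    set l := List.ofFn (fun i => (σ i : ℕ)) with hl
    have hlen : l.length = N + 1 := by simp [hl]
    set i := σ.symm ⟨1 - 1, ha⟩ with hi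
    set j := σ.symm ⟨N + 1 - 1, hn⟩ with hj
    have li : l[(i : ℕ)]'(by omega) = 0 := by
      simp only [hl, List.getElem_ofFn, hi, Fin.eta, Equiv.apply_symm_apply]
    have lj : l[(j : ℕ)]'(by omega) = N := by
      simp only [hl, List.getElem_ofFn, hj, Fin.eta, Equiv.apply_symm_apply]; rfl
    have e1 : jn 0 N (l.take i, (l.drop (i + 1)).take (k - 1), l.drop (j + 1)) = l := by
      simp only [jn]
      have a1 : N :: l.drop (j + 1) = l.drop j := by
        rw [List.drop_eq_getElem_cons (i := (j : ℕ)) (by omega), lj]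
      have a2 : l.drop j = (l.drop (i + 1)).drop (k - 1) := by
        rw [List.drop_drop]; congr 1; omega
      rw [a1, a2, List.take_append_drop]
      have a3 : 0 :: l.drop (i + 1) = l.drop i := by
        rw [List.drop_eq_getElem_cons (i := (i : ℕ)) (by omega), li]
      rw [a3, List.take_append_drop]
    refine ⟨_, ⟨?_, ?_, ?_, ?_⟩, e1⟩
    · simp [hlen]; omega
    · rw [e1, hl, List.nodup_ofFn]
      intro a b h
      exact σ.injective (Fin.ext h)
    · intro x
      rw [e1, hl, List.mem_ofFn]
      constructor
      · rintro ⟨a, rfl⟩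
        have := (σ a).2
        omega
      · intro hx
        exact ⟨σ.symm ⟨x, by omega⟩, by simp⟩
    · rw [e1]; exact hav
  · rintro ⟨⟨A, B, C⟩, ⟨h1, h2, h3, h4⟩, rfl⟩
    set l := jn 0 N (A, B, C) with hl
    have hlen : l.length = N + 1 := by
      have : l.Perm (List.range (N + 1)) := by
        rw [List.perm_ext_iff_of_nodup h2 List.nodup_range]
        intro x
        rw [h3, List.mem_range]; omega
      simpa using this.length_eq
    let f : Fin (N + 1) → Fin (N + 1) := fun i => ⟨l[(i : ℕ)]'(by omega), by
      have := (h3 (l[(i : ℕ)]'(by omega))).1 (by simp)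
      omega⟩
    have hf : Function.Injective f := by
      intro a b h
      simp only [f, Fin.mk.injEq] at h
      exact Fin.ext ((List.Nodup.getElem_inj_iff h2).1 h)
    let σ : Equiv.Perm (Fin (N + 1)) := Equiv.ofBijective f (Finite.injective_iff_bijective.1 hf)
    have hσ : ∀ i : Fin (N + 1), (σ i : ℕ) = l[(i : ℕ)]'(by omega) := fun i => rfl
    have e : List.ofFn (fun i => (σ i : ℕ)) = l := by
      apply List.ext_getElem
      · simp [hlen]
      · intro i hi hi'
        rw [List.getElem_ofFn, hσ]
    have hll : l.length = A.length + 1 + B.length + 1 + C.length := by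
      simp [hl, jn]; omega
    simp only at h1
    have p0 : σ.symm ⟨1 - 1, by omega⟩ = ⟨A.length, by omega⟩ := by
      rw [Equiv.symm_apply_eq]
      apply Fin.ext
      rw [hσ]
      simp [hl, jn]
    have p1 : σ.symm ⟨N + 1 - 1, by omega⟩ = ⟨A.length + k, by omega⟩ := by
      rw [Equiv.symm_apply_eq]
      apply Fin.ext
      rw [hσ]
      subst h1
      simp [hl, jn]
    refine ⟨σ, ⟨?_, by omega, by omega, ?_, ?_⟩, e⟩
    · rw [← AvL_ofFn, e]; exact h4
    · rw [p0, p1]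
    · intro b hb; omega

theorem stmt_7 (n k : ℕ) (hk : 1 ≤ k) (hn : k + 1 ≤ n) :
    (SPerm n 1 k).ncard =
      ∑ m ∈ (Fintype.piFinset fun _ : Fin k => Finset.Icc 2 (n + k)) |>.filter
          (fun m => ∑ i, m i = n + k - 1),
        ∏ i, (SPerm (m i) 1 1).ncard := by
  obtain ⟨N, rfl⟩ : ∃ N, n = N + 1 := ⟨n - 1, by omega⟩
  obtain ⟨k, rfl⟩ : ∃ j, k = j + 1 := ⟨k - 1, by omega⟩
  rw [SPerm_ncard N _ hk, TT_sum]
  have h0 : (TT 0 0 1).ncard = 0 := by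
    rw [Set.ncard_eq_zero (TT_finite _ _ _), Set.eq_empty_iff_forall_notMem]
    rintro ⟨A, B, C⟩ h
    exact absurd (TT_bounds h).1 (by omega)
  symm
  refine Finset.sum_bij_ne_zero (fun m _ _ i => m i - 1) ?_ ?_ ?_ ?_
  · intro m hm _
    simp only [Finset.mem_filter, Fintype.mem_piFinset, Finset.mem_Icc] at hm
    rw [Finset.Nat.mem_antidiagonalTuple]
    have : ∑ i, m i = ∑ i, (m i - 1) + (k + 1) := by
      have : ∑ i, m i = ∑ i, ((m i - 1) + 1) :=
        Finset.sum_congr rfl (fun i _ => by have := hm.1 i; omega)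
      rw [this, Finset.sum_add_distrib]; simp
    omega
  · intro m hm _ m' hm' _ e
    simp only [Finset.mem_filter, Fintype.mem_piFinset, Finset.mem_Icc] at hm hm'
    funext i
    have h1 : m i - 1 = m' i - 1 := congrFun e i
    have := hm.1 i
    have := hm'.1 i
    omega
  · intro d hd hne
    rw [Finset.Nat.mem_antidiagonalTuple] at hd
    have hpos : ∀ i, 1 ≤ d i := by
      intro i
      by_contra hh
      apply hne
      apply Finset.prod_eq_zero (Finset.mem_univ i)
      have : d i = 0 := by omega
      rw [this, h0]
    have hle : ∀ i, d i ≤ N := by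
      intro i
      rw [← hd]
      exact Finset.single_le_sum (f := d) (fun _ _ => Nat.zero_le _) (Finset.mem_univ i)
    refine ⟨fun i => d i + 1, ?_, ?_, ?_⟩
    · simp only [Finset.mem_filter, Fintype.mem_piFinset, Finset.mem_Icc]
      refine ⟨fun i => ⟨by have := hpos i; omega, by have := hle i; omega⟩, ?_⟩
      rw [Finset.sum_add_distrib, hd]
      simp; omega
    · simpa only [SPerm_ncard _ 1 le_rfl] using hne
    · funext i; simp
  · intro m hm _
    simp only [Finset.mem_filter, Fintype.mem_piFinset, Finset.mem_Icc] at hm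
    apply Finset.prod_congr rfl
    intro i _
    have := hm.1 i
    rw [← SPerm_ncard _ 1 le_rfl]
    have e : m i - 1 + 1 = m i := by omega
    rw [e]
end

section
/- Let a_{n,k} = |S_{n,k}^{1≺n}(1324)| and b_{n,k} = |S_{n,k}^{2≺n}(1324)|. For all n ≥ 3 and 2 ≤ k ≤ n−1, 2 · b_{n,k} = (n − k) · a_{n−1,k}. -/
/-- Insert the smallest value at position `j`. -/
def insMin {m : ℕ} (x : Fin (m + 1) × Equiv.Perm (Fin m)) : Equiv.Perm (Fin (m + 1)) :=
  (finSuccEquiv' x.1).trans ((Equiv.optionCongr x.2).trans (finSuccEquiv' 0).symm)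

lemma insMin_self {m : ℕ} (j : Fin (m + 1)) (τ : Equiv.Perm (Fin m)) : insMin (j, τ) j = 0 := by
  simp [insMin]

lemma insMin_succAbove {m : ℕ} (j : Fin (m + 1)) (τ : Equiv.Perm (Fin m)) (i : Fin m) :
    insMin (j, τ) (j.succAbove i) = (τ i).succ := by
  simp [insMin]

lemma insMin_symm_zero {m : ℕ} (j : Fin (m + 1)) (τ : Equiv.Perm (Fin m)) :
    (insMin (j, τ)).symm 0 = j := by
  rw [Equiv.symm_apply_eq, insMin_self]

lemma insMin_symm_succ {m : ℕ} (j : Fin (m + 1)) (τ : Equiv.Perm (Fin m)) (v : Fin m) :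
    (insMin (j, τ)).symm v.succ = j.succAbove (τ.symm v) := by
  rw [Equiv.symm_apply_eq, insMin_succAbove]; simp

lemma insMin_bij (m : ℕ) : Function.Bijective (insMin (m := m)) := by
  rw [Fintype.bijective_iff_injective_and_card]
  constructor
  · rintro ⟨j, τ⟩ ⟨j', τ'⟩ h
    have hj : j = j' := by
      rw [← insMin_symm_zero j τ, h, insMin_symm_zero]
    subst hj
    have : τ = τ' := by
      ext i
      have := insMin_succAbove j τ i
      rw [h, insMin_succAbove] at this
      rw [Fin.succ_injective _ this]
    rw [this]
  · simp [Fintype.card_perm, Nat.factorial_succ]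

lemma mem_one {m k : ℕ} (τ : Equiv.Perm (Fin (m + 1))) :
    τ ∈ SPerm (m + 1) 1 k ↔ Avoids1324 τ ∧
      ((τ.symm (Fin.last m) : Fin (m+1)) : ℕ) = (τ.symm 0 : Fin (m+1)) + k := by
  constructor
  · rintro ⟨h, _, _, h2, _⟩
    exact ⟨h, h2⟩
  · rintro ⟨h, h2⟩
    exact ⟨h, by omega, by omega, h2, fun b hb => by omega⟩

lemma mem_two {m k : ℕ} (σ : Equiv.Perm (Fin (m + 2))) :
    σ ∈ SPerm (m + 2) 2 k ↔ Avoids1324 σ ∧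
      ((σ.symm (Fin.last m).succ : Fin (m+2)) : ℕ) = (σ.symm (Fin.succ 0) : Fin (m+2)) + k ∧
      σ.symm (Fin.last m).succ < σ.symm 0 := by
  constructor
  · rintro ⟨h, _, _, h2, h3⟩
    exact ⟨h, h2, h3 0 (by simp)⟩
  · rintro ⟨h, h2, h3⟩
    refine ⟨h, by omega, by omega, h2, fun b hb => ?_⟩
    have : b = 0 := Fin.ext (by rw [Fin.val_zero]; omega)
    subst this
    exact h3

lemma avoids_ins {m : ℕ} (j : Fin (m + 2)) (τ : Equiv.Perm (Fin (m + 1)))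
    (hj : (τ.symm 0 : Fin (m+1)).castSucc < j) :
    Avoids1324 (insMin (j, τ)) ↔ Avoids1324 τ := by
  unfold Avoids1324
  rw [not_iff_not]
  constructor
  · rintro ⟨a, b, c, d, hab, hbc, hcd, h1, h2, h3⟩
    have nz : ∀ x, insMin (j, τ) a < insMin (j, τ) x → x ≠ j := by
      rintro x hx rfl
      rw [insMin_self] at hx
      exact absurd hx (Fin.not_lt_zero _)
    obtain ⟨b, rfl⟩ := Fin.exists_succAbove_eq (nz b (h1.trans h2))
    obtain ⟨c, rfl⟩ := Fin.exists_succAbove_eq (nz c h1)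
    obtain ⟨d, rfl⟩ := Fin.exists_succAbove_eq (nz d (h1.trans (h2.trans h3)))
    simp only [insMin_succAbove, Fin.succ_lt_succ_iff] at h2 h3
    have hbc' := (Fin.succAbove_lt_succAbove_iff).1 hbc
    have hcd' := (Fin.succAbove_lt_succAbove_iff).1 hcd
    by_cases ha : a = j
    · subst ha
      have hb : τ.symm 0 < b := by
        have := (Fin.lt_succAbove_iff_le_castSucc _ _).1 hab
        exact Fin.castSucc_lt_castSucc_iff.1 (lt_of_lt_of_le hj this)
      refine ⟨τ.symm 0, b, c, d, hb, hbc', hcd', ?_, h2, h3⟩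
      rw [Equiv.apply_symm_apply]
      apply Fin.pos_of_ne_zero
      intro h0
      have : c = τ.symm 0 := by rw [← h0]; simp
      exact absurd (hb.trans hbc') (by rw [this]; exact lt_irrefl _)
    · obtain ⟨a, rfl⟩ := Fin.exists_succAbove_eq ha
      simp only [insMin_succAbove, Fin.succ_lt_succ_iff] at h1
      exact ⟨a, b, c, d, (Fin.succAbove_lt_succAbove_iff).1 hab, hbc', hcd', h1, h2, h3⟩
  · rintro ⟨a, b, c, d, hab, hbc, hcd, h1, h2, h3⟩
    refine ⟨j.succAbove a, j.succAbove b, j.succAbove c, j.succAbove d, ?_⟩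
    simp only [insMin_succAbove, Fin.succ_lt_succ_iff, Fin.succAbove_lt_succAbove_iff]
    exact ⟨hab, hbc, hcd, h1, h2, h3⟩

lemma ins_mem {m k : ℕ} (j : Fin (m + 2)) (τ : Equiv.Perm (Fin (m + 1))) (hk : 0 < k) :
    insMin (j, τ) ∈ SPerm (m + 2) 2 k ↔
      τ ∈ SPerm (m + 1) 1 k ∧ (τ.symm (Fin.last m)).castSucc < j := by
  rw [mem_one, mem_two, insMin_symm_zero, insMin_symm_succ, insMin_symm_succ,
    Fin.succAbove_lt_iff_castSucc_lt]
  by_cases hq : (τ.symm (Fin.last m)).castSucc < j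
  · have e : ((j.succAbove (τ.symm (Fin.last m)) : Fin (m+2)) : ℕ) =
        (j.succAbove (τ.symm 0) : Fin (m+2)) + k ↔
        ((τ.symm (Fin.last m) : Fin (m+1)) : ℕ) = (τ.symm 0 : Fin (m+1)) + k := by
      rw [Fin.lt_def] at hq
      simp only [Fin.succAbove, Fin.lt_def, Fin.val_castSucc] at hq ⊢
      split_ifs <;> simp only [Fin.val_castSucc, Fin.val_succ] <;> omega
    rw [e]
    constructor
    · rintro ⟨h1, h2, _⟩
      refine ⟨⟨(avoids_ins j τ ?_).1 h1, h2⟩, hq⟩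
      rw [Fin.lt_def] at hq ⊢
      simp only [Fin.val_castSucc] at hq ⊢
      omega
    · rintro ⟨⟨h1, h2⟩, _⟩
      refine ⟨(avoids_ins j τ ?_).2 h1, h2, hq⟩
      rw [Fin.lt_def] at hq ⊢
      simp only [Fin.val_castSucc] at hq ⊢
      omega
  · simp [hq]

/-- reverse-complement -/
def rcPerm {m : ℕ} (τ : Equiv.Perm (Fin m)) : Equiv.Perm (Fin m) :=
  Fin.revPerm.trans (τ.trans Fin.revPerm)

lemma rc_rc {m : ℕ} (τ : Equiv.Perm (Fin m)) : rcPerm (rcPerm τ) = τ := by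
  ext i; simp [rcPerm]

lemma rc_symm {m : ℕ} (τ : Equiv.Perm (Fin m)) (v : Fin m) :
    (rcPerm τ).symm v = (τ.symm v.rev).rev := by
  rw [Equiv.symm_apply_eq]; simp [rcPerm]

lemma rc_avoids {m : ℕ} (τ : Equiv.Perm (Fin m)) (h : Avoids1324 τ) : Avoids1324 (rcPerm τ) := by
  rintro ⟨a, b, c, d, hab, hbc, hcd, h1, h2, h3⟩
  simp only [rcPerm, Equiv.trans_apply, Fin.revPerm_apply, Fin.rev_lt_rev] at h1 h2 h3
  exact h ⟨d.rev, c.rev, b.rev, a.rev, Fin.rev_lt_rev.2 hcd, Fin.rev_lt_rev.2 hbc,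
    Fin.rev_lt_rev.2 hab, h3, h2, h1⟩

lemma rc_mem {m k : ℕ} (τ : Equiv.Perm (Fin (m + 1))) (h : τ ∈ SPerm (m + 1) 1 k) :
    rcPerm τ ∈ SPerm (m + 1) 1 k := by
  rw [mem_one] at h ⊢
  refine ⟨rc_avoids _ h.1, ?_⟩
  rw [rc_symm, rc_symm, Fin.rev_last, Fin.rev_zero, Fin.val_rev, Fin.val_rev]
  omega

theorem stmt_8 (n k : ℕ) (hn : 3 ≤ n) (hk : 2 ≤ k) (hkn : k ≤ n - 1) :
    2 * (SPerm n 2 k).ncard = (n - k) * (SPerm (n - 1) 1 k).ncard := by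
  classical
  obtain ⟨m, rfl⟩ : ∃ m, n = m + 2 := ⟨n - 2, by omega⟩
  change 2 * (SPerm (m + 2) 2 k).ncard = (m + 2 - k) * (SPerm (m + 1) 1 k).ncard
  set A : Finset (Equiv.Perm (Fin (m + 1))) := (SPerm (m + 1) 1 k).toFinset with hA
  have hmem : ∀ τ, τ ∈ A ↔ τ ∈ SPerm (m + 1) 1 k := by simp [hA]
  have hAc : (SPerm (m + 1) 1 k).ncard = A.card := by
    rw [Set.ncard_eq_toFinset_card']
  have hB : (SPerm (m + 2) 2 k).ncard =
      ∑ τ ∈ A, (m + 1 - ((τ.symm (Fin.last m) : Fin (m+1)) : ℕ)) := by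
    have h1 : SPerm (m + 2) 2 k = ((A.sigma fun τ =>
        Finset.Ioi (τ.symm (Fin.last m)).castSucc).image fun x => insMin (x.2, x.1) :
          Finset (Equiv.Perm (Fin (m + 2)))) := by
      ext σ
      obtain ⟨⟨j, τ⟩, rfl⟩ := (insMin_bij (m + 1)).2 σ
      rw [ins_mem j τ (by omega)]
      simp only [Finset.coe_image, Set.mem_image, Finset.mem_coe, Finset.mem_sigma,
        Finset.mem_Ioi, hmem]
      constructor
      · rintro ⟨h, h'⟩
        exact ⟨⟨τ, j⟩, ⟨h, h'⟩, rfl⟩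
      · rintro ⟨⟨τ', j'⟩, h, e⟩
        have := (insMin_bij (m + 1)).1 e
        simp only [Prod.mk.injEq] at this
        obtain ⟨rfl, rfl⟩ := this
        exact h
    rw [h1, Set.ncard_coe_finset, Finset.card_image_of_injective, Finset.card_sigma]
    · refine Finset.sum_congr rfl fun τ _ => ?_
      rw [Fin.card_Ioi]
      simp
    · rintro ⟨τ, j⟩ ⟨τ', j'⟩ e
      have := (insMin_bij (m + 1)).1 e
      simp only [Prod.mk.injEq] at this
      obtain ⟨rfl, rfl⟩ := this
      rfl
  have hS : ∑ τ ∈ A, (m + 1 - ((τ.symm (Fin.last m) : Fin (m+1)) : ℕ)) =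
      ∑ τ ∈ A, (m + 1 - (((rcPerm τ).symm (Fin.last m) : Fin (m+1)) : ℕ)) := by
    refine Finset.sum_nbij' rcPerm rcPerm ?_ ?_ ?_ ?_ ?_
    · intro τ h; rw [hmem] at h ⊢; exact rc_mem τ h
    · intro τ h; rw [hmem] at h ⊢; exact rc_mem τ h
    · intro τ _; exact rc_rc τ
    · intro τ _; exact rc_rc τ
    · intro τ _; rw [rc_rc]
  rw [hAc, hB, two_mul]
  nth_rewrite 2 [hS]
  rw [← Finset.sum_add_distrib, mul_comm, ← smul_eq_mul, ← Finset.sum_const]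
  refine Finset.sum_congr rfl fun τ h => ?_
  rw [hmem, mem_one] at h
  rw [rc_symm, Fin.rev_last, Fin.val_rev]
  omega
end

section
/- Let a_{n,k} = |S_{n,k}^{1≺n}(1324)| (with a_{n,k} = 0 when no such permutations exist). For all n ≥ 2 and k ≥ 2, (k − 1) · a_{n−1,k} = Σ_{j=1}^{k−1} Σ_{m=1}^{n−1} a_{m,j} · a_{n−m,k−j}. (In generating function terms, with g₁(x,t) = Σ_{k≥1} Σ_n a_{n,k} t^k xⁿ, this says x·g₁ − t·x·(∂g₁/∂t) = −g₁².) -/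
structure PreOrd1324 (lo hi : ℕ) (r : ℕ → ℕ → Prop) : Prop where
  supp : ∀ x y, r x y → lo ≤ x ∧ x ≤ hi ∧ lo ≤ y ∧ y ≤ hi
  irr : ∀ x, ¬ r x x
  tr : ∀ x y z, r x y → r y z → r x z
  tot : ∀ x y, lo ≤ x → x ≤ hi → lo ≤ y → y ≤ hi → x ≠ y → r x y ∨ r y x
  av : ∀ a b c d, a < b → b < c → c < d → r a c → r c b → r b d → False

def btwn (r : ℕ → ℕ → Prop) (a b : ℕ) : Set ℕ := {y | r a y ∧ r y b}

def POrd (lo hi k : ℕ) : Set (ℕ → ℕ → Prop) :=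
  {r | PreOrd1324 lo hi r ∧ r lo hi ∧ (btwn r lo hi).ncard + 1 = k}

def resL (q : ℕ) (r : ℕ → ℕ → Prop) : ℕ → ℕ → Prop := fun x y => x ≤ q ∧ y ≤ q ∧ r x y
def resU (q : ℕ) (r : ℕ → ℕ → Prop) : ℕ → ℕ → Prop := fun x y => q ≤ x ∧ q ≤ y ∧ r x y

def glueOrd (q : ℕ) (L U : ℕ → ℕ → Prop) : ℕ → ℕ → Prop := fun x y =>
  (x ≤ q ∧ y ≤ q ∧ L x y) ∨ (q ≤ x ∧ q ≤ y ∧ U x y) ∨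
  (q < x ∧ y < q ∧ ((U x q ∧ L y q) ∨ (U x q ∧ L q y) ∨ (U q x ∧ L q y))) ∨
  (x < q ∧ q < y ∧ L x q ∧ U q y)

theorem btw_finite {lo hi : ℕ} {r : ℕ → ℕ → Prop} (h : PreOrd1324 lo hi r) (a b : ℕ) :
    (btwn r a b).Finite :=
  (Set.finite_Iic hi).subset fun y hy => (h.supp _ _ hy.1).2.2.2

theorem btw_split {lo hi q : ℕ} {r : ℕ → ℕ → Prop} (h : PreOrd1324 lo hi r)
    (h1 : r lo q) (h2 : r q hi) :
    (btwn r lo hi).ncard = (btwn r lo q).ncard + 1 + (btwn r q hi).ncard := by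
  have e : btwn r lo hi = insert q (btwn r lo q) ∪ btwn r q hi := by
    ext y
    simp only [btwn, Set.mem_ofPred_eq, Set.mem_union, Set.mem_insert_iff]
    have := h.supp
    have := h.tr
    have := h.tot
    grind
  have hd : Disjoint (insert q (btwn r lo q)) (btwn r q hi) := by
    rw [Set.disjoint_left]
    rintro y (rfl | hy) hy'
    · exact h.irr _ hy'.1
    · exact h.irr _ (h.tr _ _ _ hy.2 hy'.1)
  rw [e, Set.ncard_union_eq hd ((btw_finite h _ _).insert _) (btw_finite h _ _),
    Set.ncard_insert_of_notMem (fun hq => h.irr _ hq.2) (btw_finite h _ _)]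

theorem btw_resL {lo hi q : ℕ} {r : ℕ → ℕ → Prop} (h : PreOrd1324 lo hi r)
    (h1 : r lo q) (h2 : r q hi) : btwn (resL q r) lo q = btwn r lo q := by
  ext y
  simp only [btwn, Set.mem_ofPred_eq, resL]
  have s := h.supp
  have s1 := s _ _ h1
  constructor
  · grind
  · rintro ⟨a, b⟩
    have s2 := s _ _ a
    have : y ≤ q := by
      by_contra hc
      have n1 : lo ≠ q := fun e => h.irr _ (e ▸ h1)
      have n2 : y ≠ hi := fun e => h.irr q (h.tr _ _ _ h2 (e ▸ b))
      exact h.av lo q y hi (by omega) (by omega) (by omega) a b h2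
    grind

theorem btw_resU {lo hi q : ℕ} {r : ℕ → ℕ → Prop} (h : PreOrd1324 lo hi r)
    (h1 : r lo q) (h2 : r q hi) : btwn (resU q r) q hi = btwn r q hi := by
  ext y
  simp only [btwn, Set.mem_ofPred_eq, resU]
  have s := h.supp
  have s1 := s _ _ h2
  constructor
  · grind
  · rintro ⟨a, b⟩
    have s2 := s _ _ a
    have : q ≤ y := by
      by_contra hc
      have n1 : q ≠ hi := fun e => h.irr _ (e ▸ h2)
      have n2 : y ≠ lo := fun e => h.irr q (h.tr _ _ _ a (e ▸ h1))
      exact h.av lo y q hi (by omega) (by omega) (by omega) h1 a b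
    grind

theorem pre_resL {lo hi q : ℕ} {r : ℕ → ℕ → Prop} (h : PreOrd1324 lo hi r) (hq : q ≤ hi) :
    PreOrd1324 lo q (resL q r) where
  supp x y := by have := h.supp x y; grind [resL]
  irr x := by have := h.irr x; grind [resL]
  tr x y z := by have := h.tr x y z; grind [resL]
  tot x y := by have := h.tot x y; grind [resL]
  av a b c d := by have := h.av a b c d; grind [resL]

theorem pre_resU {lo hi q : ℕ} {r : ℕ → ℕ → Prop} (h : PreOrd1324 lo hi r) (hq : lo ≤ q) :
    PreOrd1324 q hi (resU q r) where
  supp x y := by have := h.supp x y; grind [resU]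
  irr x := by have := h.irr x; grind [resU]
  tr x y z := by have := h.tr x y z; grind [resU]
  tot x y := by have := h.tot x y; grind [resU]
  av a b c d := by have := h.av a b c d; grind [resU]

theorem glue_LL {q : ℕ} {L U : ℕ → ℕ → Prop} (hU : ¬ U q q) {x y : ℕ} (hx : x ≤ q) (hy : y ≤ q) :
    glueOrd q L U x y ↔ L x y := by
  unfold glueOrd; grind

theorem glue_UU {q : ℕ} {L U : ℕ → ℕ → Prop} (hL : ¬ L q q) {x y : ℕ} (hx : q ≤ x) (hy : q ≤ y) :
    glueOrd q L U x y ↔ U x y := by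
  unfold glueOrd; grind

theorem glue_UL {q : ℕ} {L U : ℕ → ℕ → Prop} {x y : ℕ} (hx : q < x) (hy : y < q) :
    glueOrd q L U x y ↔ ((U x q ∧ L y q) ∨ (U x q ∧ L q y) ∨ (U q x ∧ L q y)) := by
  unfold glueOrd; grind

theorem glue_LU {q : ℕ} {L U : ℕ → ℕ → Prop} {x y : ℕ} (hx : x < q) (hy : q < y) :
    glueOrd q L U x y ↔ (L x q ∧ U q y) := by
  unfold glueOrd; grind

theorem pre_glue {lo hi q : ℕ} {L U : ℕ → ℕ → Prop} (hlo : lo ≤ q) (hhi : q ≤ hi)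
    (hL : PreOrd1324 lo q L) (hU : PreOrd1324 q hi U) : PreOrd1324 lo hi (glueOrd q L U) where
  supp x y h := by
    have := hL.supp; have := hU.supp
    unfold glueOrd at h
    grind
  irr x h := by
    have := hL.irr x; have := hU.irr x
    unfold glueOrd at h
    grind
  tr x y z h1 h2 := by
    have a1 := hL.tr; have a2 := hU.tr
    have a3 := hL.irr; have a4 := hU.irr
    have a5 := hL.supp; have a6 := hU.supp
    have a7 := hL.tot; have a8 := hU.tot
    unfold glueOrd at *
    grind
  tot x y h1 h2 h3 h4 hne := by
    have a7 := hL.tot; have a8 := hU.tot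
    unfold glueOrd
    grind
  av a b c d hab hbc hcd h1 h2 h3 := by
    have a1 := hL.tr; have a2 := hU.tr
    have a3 := hL.irr; have a4 := hU.irr
    have a9 := hL.av; have a10 := hU.av
    unfold glueOrd at *
    grind

theorem resL_glue {lo hi q : ℕ} {L U : ℕ → ℕ → Prop}
    (hL : PreOrd1324 lo q L) (hU : PreOrd1324 q hi U) : resL q (glueOrd q L U) = L := by
  funext x y
  apply propext
  have := hL.supp x y
  have := hU.irr q
  unfold resL glueOrd
  grind

theorem resU_glue {lo hi q : ℕ} {L U : ℕ → ℕ → Prop}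
    (hL : PreOrd1324 lo q L) (hU : PreOrd1324 q hi U) : resU q (glueOrd q L U) = U := by
  funext x y
  apply propext
  have := hU.supp x y
  have := hL.irr q
  unfold resU glueOrd
  grind

theorem glue_res {lo hi q : ℕ} {r : ℕ → ℕ → Prop} (h : PreOrd1324 lo hi r)
    (h1 : r lo q) (h2 : r q hi) : glueOrd q (resL q r) (resU q r) = r := by
  have s := h.supp
  have t := h.tr
  have i := h.irr
  have s1 := s _ _ h1
  have s2 := s _ _ h2
  have k1 : ∀ x y, q < x → y < q → r y x → r x q → False := fun x y hx hy a b => by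
    have n2 : x ≠ hi := fun e => h.irr q (h.tr _ _ _ h2 (e ▸ b))
    have := s _ _ a
    exact h.av y q x hi hy hx (by omega) a b h2
  have k2 : ∀ x y, q < x → y < q → r y x → r q y → False := fun x y hx hy a b => by
    have n2 : y ≠ lo := fun e => h.irr q (h.tr _ _ _ b (e ▸ h1))
    have := s _ _ a
    exact h.av lo y q x (by omega) hy hx h1 b a
  have tt := h.tot
  funext x y
  apply propext
  rcases lt_trichotomy x q with hx | hx | hx <;> rcases lt_trichotomy y q with hy | hy | hy <;>
  · unfold glueOrd resL resU; grind

def FOrd (lo hi k j q : ℕ) : Set (ℕ → ℕ → Prop) :=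
  {r | r ∈ POrd lo hi k ∧ r lo q ∧ r q hi ∧ (btwn r lo q).ncard + 1 = j}

theorem FOrd_ncard {lo hi q : ℕ} (j k : ℕ) (hlo : lo ≤ q) (hhi : q ≤ hi) :
    (FOrd lo hi (j + k) j q).ncard = (POrd lo q j).ncard * (POrd q hi k).ncard := by
  rw [← Set.ncard_prod]
  refine Set.ncard_congr (fun r _ => (resL q r, resU q r)) ?_ ?_ ?_
  · rintro r ⟨⟨hp, h0, hc⟩, h1, h2, hj⟩
    have := btw_split hp h1 h2
    refine ⟨⟨pre_resL hp hhi, ⟨hlo, le_rfl, h1⟩, ?_⟩, ⟨pre_resU hp hlo, ⟨le_rfl, hhi, h2⟩, ?_⟩⟩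
    · simp only [btw_resL hp h1 h2]; exact hj
    · simp only [btw_resU hp h1 h2]; omega
  · rintro r r' ⟨⟨hp, h0, hc⟩, h1, h2, hj⟩ ⟨⟨hp', h0', hc'⟩, h1', h2', hj'⟩ e
    simp only [Prod.mk.injEq] at e
    rw [← glue_res hp h1 h2, ← glue_res hp' h1' h2', e.1, e.2]
  · rintro ⟨L, U⟩ ⟨⟨hL, hL1, hLc⟩, ⟨hU, hU1, hUc⟩⟩
    simp only at hL hL1 hLc hU hU1 hUc
    have hp := pre_glue hlo hhi hL hU
    have h1 : glueOrd q L U lo q := (glue_LL (hU.irr q) hlo le_rfl).2 hL1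
    have h2 : glueOrd q L U q hi := (glue_UU (hL.irr q) le_rfl hhi).2 hU1
    have c1 := btw_resL hp h1 h2
    have c2 := btw_resU hp h1 h2
    rw [resL_glue hL hU] at c1
    rw [resU_glue hL hU] at c2
    have := btw_split hp h1 h2
    rw [← c1, ← c2] at this
    refine ⟨_, ⟨⟨hp, hp.tr _ _ _ h1 h2, by omega⟩, h1, h2, by rw [← c1]; exact hLc⟩, ?_⟩
    simp only [resL_glue hL hU, resU_glue hL hU]

theorem btw_lt {lo hi q q' : ℕ} {r : ℕ → ℕ → Prop} (h : PreOrd1324 lo hi r)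
    (h1 : r lo q) (h2 : r q q') : (btwn r lo q).ncard < (btwn r lo q').ncard := by
  apply Set.ncard_lt_ncard _ (btw_finite h _ _)
  refine ⟨fun y hy => ⟨hy.1, h.tr _ _ _ hy.2 h2⟩, fun hc => ?_⟩
  exact h.irr _ (hc ⟨h1, h2⟩ : q ∈ btwn r lo q).2

theorem FOrd_uniq {lo hi k j q q' : ℕ} {r : ℕ → ℕ → Prop} (h : r ∈ FOrd lo hi k j q)
    (h' : r ∈ FOrd lo hi k j q') : q = q' := by
  obtain ⟨⟨hp, h0, hc⟩, h1, h2, hj⟩ := h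
  obtain ⟨_, h1', h2', hj'⟩ := h'
  by_contra hne
  have s := hp.supp _ _ h1
  have s' := hp.supp _ _ h1'
  rcases hp.tot q q' s.2.2.1 s.2.2.2 s'.2.2.1 s'.2.2.2 hne with a | a
  · have := btw_lt hp h1 a; omega
  · have := btw_lt hp h1' a; omega

theorem FOrd_exists {lo hi k j : ℕ} (hj : 1 ≤ j) (hk : 1 ≤ k) {r : ℕ → ℕ → Prop}
    (h : r ∈ POrd lo hi (j + k)) : ∃ q, lo ≤ q ∧ q ≤ hi ∧ r ∈ FOrd lo hi (j + k) j q := by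
  obtain ⟨hp, h0, hc⟩ := h
  have fin := btw_finite hp lo hi
  have key := Finset.surjOn_of_injOn_of_card_le (s := fin.toFinset)
    (t := Finset.range (j + k - 1)) (fun q => (btwn r lo q).ncard) (by
      intro q hq
      simp only [Set.Finite.coe_toFinset] at hq
      have := btw_lt hp hq.1 hq.2
      simp only [Finset.coe_range, Set.mem_Iio]
      omega) (by
      intro q hq q' hq' e
      simp only [Set.Finite.coe_toFinset] at hq hq'
      simp only at e
      by_contra hne
      have s := hp.supp _ _ hq.1
      have s' := hp.supp _ _ hq'.1
      rcases hp.tot q q' s.2.2.1 s.2.2.2 s'.2.2.1 s'.2.2.2 hne with a | a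
      · have := btw_lt hp hq.1 a; omega
      · have := btw_lt hp hq'.1 a; omega) (by
      rw [← Set.ncard_eq_toFinset_card _ fin, Finset.card_range]; omega)
  obtain ⟨q, hq, e⟩ := key (show j - 1 ∈ _ by simp; omega)
  simp only [Set.Finite.coe_toFinset] at hq
  simp only at e
  have s := hp.supp _ _ hq.1
  exact ⟨q, s.2.2.1, s.2.2.2, ⟨hp, h0, hc⟩, hq.1, hq.2, by omega⟩

/-- order of positions, from a permutation -/
def toOrd (lo : ℕ) {n : ℕ} (σ : Equiv.Perm (Fin n)) : ℕ → ℕ → Prop := fun x y =>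
  ∃ a b : Fin n, x = lo + a ∧ y = lo + b ∧ σ.symm a < σ.symm b

theorem toOrd_iff (lo : ℕ) {n : ℕ} (σ : Equiv.Perm (Fin n)) (a b : Fin n) :
    toOrd lo σ (lo + a) (lo + b) ↔ σ.symm a < σ.symm b := by
  constructor
  · rintro ⟨a', b', h1, h2, h⟩
    have e1 : a = a' := Fin.ext (by omega)
    have e2 : b = b' := Fin.ext (by omega)
    rw [e1, e2]; exact h
  · exact fun h => ⟨a, b, rfl, rfl, h⟩

theorem perm_pos {n : ℕ} (σ : Equiv.Perm (Fin n)) (a : Fin n) :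
    (Finset.univ.filter fun b => σ.symm b < σ.symm a).card = (σ.symm a : ℕ) := by
  rw [← Fin.card_Iio (σ.symm a)]
  apply Finset.card_bij (fun b _ => σ.symm b)
  · intro b hb; simpa using hb
  · intro b _ b' _ h; exact σ.symm.injective h
  · intro c hc; exact ⟨σ c, by simpa using hc, by simp⟩

theorem toOrd_inj (lo : ℕ) {n : ℕ} (σ τ : Equiv.Perm (Fin n)) (h : toOrd lo σ = toOrd lo τ) :
    σ = τ := by
  have : σ.symm = τ.symm := by
    ext a
    rw [← perm_pos σ a, ← perm_pos τ a]
    congr 2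
    ext b
    rw [← toOrd_iff lo, ← toOrd_iff lo, h]
  rw [← Equiv.symm_symm σ, this, Equiv.symm_symm]

theorem toOrd_surj {lo hi n : ℕ} (hn : hi + 1 = lo + n) {r : ℕ → ℕ → Prop}
    (h : PreOrd1324 lo hi r) : ∃ σ : Equiv.Perm (Fin n), toOrd lo σ = r := by
  classical
  let c : Fin n → ℕ := fun a => (Finset.univ.filter fun b : Fin n => r (lo + b) (lo + a)).card
  have mono : ∀ a b : Fin n, r (lo + a) (lo + b) → c a < c b := by
    intro a b hab
    apply Finset.card_lt_card
    refine ⟨fun x hx => ?_, fun hc => ?_⟩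
    · simp only [Finset.mem_filter, Finset.mem_univ, true_and] at hx ⊢
      exact h.tr _ _ _ hx hab
    · have := hc (show a ∈ _ by simpa using hab)
      simp only [Finset.mem_filter, Finset.mem_univ, true_and] at this
      exact h.irr _ this
  have tot : ∀ a b : Fin n, a ≠ b → r (lo + a) (lo + b) ∨ r (lo + b) (lo + a) := by
    intro a b hab
    have : (a : ℕ) ≠ b := fun e => hab (Fin.ext e)
    exact h.tot _ _ (by omega) (by omega) (by omega) (by omega) (by omega)
  have clt : ∀ a, c a < n := by
    intro a
    have : c a < (Finset.univ : Finset (Fin n)).card := by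
      apply Finset.card_lt_card
      rw [Finset.filter_ssubset]
      exact ⟨a, Finset.mem_univ _, h.irr _⟩
    simpa using this
  let p : Fin n → Fin n := fun a => ⟨c a, clt a⟩
  have pinj : Function.Injective p := by
    intro a b hab
    have hab : c a = c b := congrArg Fin.val hab
    by_contra hne
    rcases tot a b hne with t | t
    · have := mono _ _ t; omega
    · have := mono _ _ t; omega
  let e : Equiv.Perm (Fin n) := Equiv.ofBijective p (Finite.injective_iff_bijective.1 pinj)
  refine ⟨e.symm, ?_⟩
  funext x y
  apply propext
  constructor
  · rintro ⟨a, b, rfl, rfl, hab⟩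
    have hab : c a < c b := hab
    rcases tot a b (by rintro rfl; omega) with t | t
    · exact t
    · have := mono _ _ t; omega
  · intro hxy
    have s := h.supp _ _ hxy
    refine ⟨⟨x - lo, by omega⟩, ⟨y - lo, by omega⟩, by simp; omega, by simp; omega, ?_⟩
    have := mono ⟨x - lo, by omega⟩ ⟨y - lo, by omega⟩ (by
      simpa [Nat.add_sub_cancel' s.1, Nat.add_sub_cancel' s.2.2.1] using hxy)
    exact this

theorem toOrd_pre {lo hi n : ℕ} (hn : hi + 1 = lo + n) (σ : Equiv.Perm (Fin n)) :
    PreOrd1324 lo hi (toOrd lo σ) ↔ Avoids1324 σ := by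
  constructor
  · rintro h ⟨i, j, k, l, hij, hjk, hkl, h1, h2, h3⟩
    refine h.av (lo + σ i) (lo + σ k) (lo + σ j) (lo + σ l) (by omega) (by omega) (by omega)
      ?_ ?_ ?_ <;> rw [toOrd_iff] <;> simpa
  · intro h
    constructor
    · rintro x y ⟨a, b, rfl, rfl, _⟩
      omega
    · rintro x ⟨a, b, e1, e2, hab⟩
      have : a = b := Fin.ext (by omega)
      subst this
      exact lt_irrefl _ hab
    · rintro x y z ⟨a, b, rfl, rfl, hab⟩ ⟨b', c, e, rfl, hbc⟩
      have : b = b' := Fin.ext (by omega)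
      subst this
      exact ⟨a, c, rfl, rfl, hab.trans hbc⟩
    · intro x y h1 h2 h3 h4 hne
      have hne' : σ.symm ⟨x - lo, by omega⟩ ≠ σ.symm ⟨y - lo, by omega⟩ := by
        intro e
        have := congrArg Fin.val (σ.symm.injective e)
        simp only at this
        omega
      rcases lt_or_gt_of_ne hne' with t | t
      · exact Or.inl ⟨_, _, by simp; omega, by simp; omega, t⟩
      · exact Or.inr ⟨_, _, by simp; omega, by simp; omega, t⟩
    · rintro a b c d hab hbc hcd ⟨a', c', rfl, rfl, h1⟩ ⟨c'', b', e, rfl, h2⟩ ⟨b'', d', e', rfl, h3⟩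
      have : c' = c'' := Fin.ext (by omega)
      subst this
      have : b' = b'' := Fin.ext (by omega)
      subst this
      apply h
      refine ⟨_, _, _, _, h1, h2, h3, ?_, ?_, ?_⟩ <;>
      · simp only [Equiv.apply_symm_apply, Fin.lt_def]; omega

theorem toOrd_btw (lo : ℕ) {n : ℕ} (σ : Equiv.Perm (Fin n)) (a b : Fin n)
    (hab : σ.symm a < σ.symm b) :
    (btwn (toOrd lo σ) (lo + a) (lo + b)).ncard + 1 = (σ.symm b : ℕ) - σ.symm a := by
  have e : btwn (toOrd lo σ) (lo + a) (lo + b)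
      = (fun i : Fin n => lo + (σ i : ℕ)) '' (Finset.Ioo (σ.symm a) (σ.symm b) : Finset (Fin n)) := by
    ext y
    simp only [btwn, Set.mem_ofPred_eq, Set.mem_image, Finset.coe_Ioo, Set.mem_Ioo]
    constructor
    · rintro ⟨⟨a', c, e1, rfl, h1⟩, h2⟩
      have : a = a' := Fin.ext (by omega)
      subst this
      rw [toOrd_iff] at h2
      exact ⟨σ.symm c, ⟨h1, h2⟩, by simp⟩
    · rintro ⟨i, ⟨h1, h2⟩, rfl⟩
      rw [toOrd_iff, toOrd_iff]
      simpa using ⟨h1, h2⟩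
  rw [e, Set.ncard_image_of_injective, Set.ncard_coe_finset, Fin.card_Ioo]
  · have : (σ.symm a : ℕ) < σ.symm b := hab
    omega
  · intro i j hij
    exact σ.injective (Fin.ext (by simpa using hij))

theorem transfer {lo hi n k : ℕ} (hn : hi + 1 = lo + n) (hlo : lo ≤ hi) (hk : 1 ≤ k) :
    (SPerm n 1 k).ncard = (POrd lo hi k).ncard := by
  have hn0 : 0 < n := by omega
  have key : ∀ σ : Equiv.Perm (Fin n), toOrd lo σ ∈ POrd lo hi k ↔ σ ∈ SPerm n 1 k := by
    intro σ
    have e1 : lo = lo + ((⟨0, hn0⟩ : Fin n) : ℕ) := by simp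
    have e2 : hi = lo + ((⟨n - 1, by omega⟩ : Fin n) : ℕ) := by simp; omega
    have hi1 : toOrd lo σ lo hi ↔ σ.symm ⟨0, hn0⟩ < σ.symm ⟨n - 1, by omega⟩ := by
      rw [← toOrd_iff lo, ← e1, ← e2]
    have hi2 := toOrd_btw lo σ ⟨0, hn0⟩ ⟨n - 1, by omega⟩
    rw [← e1, ← e2] at hi2
    constructor
    · rintro ⟨hp, h0, hc⟩
      refine ⟨(toOrd_pre hn σ).1 hp, by omega, by omega, ?_, fun b hb => by omega⟩
      have h0' := hi1.1 h0
      have := hi2 h0'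
      rw [Fin.lt_def] at h0'
      simp only [Nat.sub_self]
      omega
    · rintro ⟨hp, h1, h2, h3, -⟩
      simp only [Nat.sub_self] at h3
      have h0' : σ.symm ⟨0, hn0⟩ < σ.symm ⟨n - 1, by omega⟩ := by
        rw [Fin.lt_def]; omega
      have := hi2 h0'
      exact ⟨(toOrd_pre hn σ).2 hp, hi1.2 h0', by omega⟩
  refine Set.ncard_congr (fun σ _ => toOrd lo σ) ?_ ?_ ?_
  · intro σ hσ; exact (key σ).2 hσ
  · intro σ τ _ _ h; exact toOrd_inj lo σ τ h
  · intro r hr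
    obtain ⟨σ, rfl⟩ := toOrd_surj hn hr.1
    exact ⟨σ, (key σ).1 hr, rfl⟩

theorem POrd_finite {lo hi k : ℕ} (hlo : lo ≤ hi) : (POrd lo hi k).Finite := by
  refine (Set.finite_range (fun σ : Equiv.Perm (Fin (hi + 1 - lo)) => toOrd lo σ)).subset ?_
  intro r hr
  obtain ⟨σ, rfl⟩ := toOrd_surj (n := hi + 1 - lo) (by omega) hr.1
  exact ⟨σ, rfl⟩

theorem POrd_sum {hi j k : ℕ} (hj : 1 ≤ j) (hk : 1 ≤ k) :
    (POrd 0 hi (j + k)).ncard =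
      ∑ q ∈ Finset.range (hi + 1), (POrd 0 q j).ncard * (POrd q hi k).ncard := by
  classical
  have fin : ∀ q, (FOrd 0 hi (j + k) j q).Finite := fun q =>
    (POrd_finite (k := j + k) (Nat.zero_le hi)).subset fun r hr => hr.1
  have e : POrd 0 hi (j + k)
      = ((Finset.range (hi + 1)).biUnion fun q => (fin q).toFinset : Finset _) := by
    ext r
    simp only [Finset.coe_biUnion, Set.Finite.coe_toFinset, Set.mem_iUnion, Finset.coe_range,
      Set.mem_Iio, exists_prop]
    constructor
    · intro h
      obtain ⟨q, _, h2, h3⟩ := FOrd_exists hj hk h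
      exact ⟨q, by omega, h3⟩
    · rintro ⟨q, _, h⟩; exact h.1
  rw [e, Set.ncard_coe_finset, Finset.card_biUnion]
  · apply Finset.sum_congr rfl
    intro q hq
    rw [Finset.mem_range] at hq
    rw [← Set.ncard_eq_toFinset_card _ (fin q), FOrd_ncard j k (Nat.zero_le q) (by omega)]
  · intro q _ q' _ hne
    refine Finset.disjoint_left.2 ?_
    intro r h h'
    rw [Set.Finite.mem_toFinset] at h h'
    exact hne (FOrd_uniq h h')

/-- with `a_{n,k} = |S_{n,k}^{1≺n}(1324)|`, for `n ≥ 2` and `k ≥ 2`,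
`(k - 1) a_{n-1,k} = Σ_{j=1}^{k-1} Σ_{m=1}^{n-1} a_{m,j} a_{n-m,k-j}`
(the coefficient form of `x g₁ - t x ∂g₁/∂t = -g₁²`). -/
theorem stmt_10 (n k : ℕ) (hn : 2 ≤ n) (hk : 2 ≤ k) :
    (k - 1) * (SPerm (n - 1) 1 k).ncard =
      ∑ j ∈ Finset.Icc 1 (k - 1), ∑ m ∈ Finset.Icc 1 (n - 1),
        (SPerm m 1 j).ncard * (SPerm (n - m) 1 (k - j)).ncard := by
  have inner : ∀ j ∈ Finset.Icc 1 (k - 1), ∑ m ∈ Finset.Icc 1 (n - 1),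
        (SPerm m 1 j).ncard * (SPerm (n - m) 1 (k - j)).ncard = (SPerm (n - 1) 1 k).ncard := by
    intro j hj
    rw [Finset.mem_Icc] at hj
    obtain ⟨i, rfl⟩ : ∃ i, k = j + i := ⟨k - j, by omega⟩
    obtain ⟨N, rfl⟩ : ∃ N, n = N + 2 := ⟨n - 2, by omega⟩
    rw [transfer (lo := 0) (hi := N) (by omega) (by omega) (by omega),
      POrd_sum (by omega) (by omega)]
    symm
    refine Finset.sum_bij (fun q _ => q + 1) ?_ ?_ ?_ ?_
    · intro q hq; simp at hq ⊢; omega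
    · intro a _ b _ h; omega
    · intro b hb
      rw [Finset.mem_Icc] at hb
      exact ⟨b - 1, by simp; omega, by omega⟩
    · intro q hq
      rw [Finset.mem_range] at hq
      rw [transfer (lo := 0) (hi := q) (n := q + 1) (by omega) (by omega) (by omega),
        transfer (lo := q) (hi := N) (n := N + 2 - (q + 1)) (by omega) (by omega) (by omega),
        Nat.add_sub_cancel_left]
  rw [Finset.sum_congr rfl inner]
  simp
end

section
/- Let a_{n,k} = |S_{n,k}^{1≺n}(1324)| and b_{n,k} = |S_{n,k}^{2≺n}(1324)| (each 0 when no such permutations exist). In the ring of formal power series over the rationals, define f = Σ_{n≥1} a_{n+1,1} x^n, T_{2,0} = x², and for j ≥ 1, T_{2,j} = Σ_{n≥1} b_{n,j} x^n. Then for every k ≥ 2, T_{2,k} = f^k · T_{2,0} + k · f^{k−1} · (T_{2,1} − f · T_{2,0}). -/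
namespace Pf

def NP (n : ℕ) (s : ℕ → ℕ) : Prop :=
  (∀ x, x ≤ n → s x ≤ n) ∧ (∀ x y, x ≤ n → y ≤ n → s x = s y → x = y) ∧
  (∀ x, n < x → s x = 0) ∧
  (∀ a b c d, a < b → b < c → c < d → d ≤ n → s a < s c → s c < s b → s b < s d → False)

def Q (n k : ℕ) (z : (ℕ → ℕ) × ℕ) : Prop :=
  NP n z.1 ∧ ∃ i, i + k + z.2 = n ∧ z.1 i = 0 ∧ z.1 (i + k) = n

def glue (p q l P : ℕ) (M U : ℕ → ℕ) : ℕ → ℕ := fun x =>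
  if x < l then U x + p else if x ≤ l + P then M (x - l) else
  if x ≤ P + q then U (x - P) + p else if x ≤ p + q then M (x - q) else 0

theorem glue_cases {p q l P : ℕ} {M U : ℕ → ℕ} (hM : NP p M) (hU : NP q U)
    (hl : l + 1 ≤ q) (hP : P ≤ p) (hU0 : U l = 0)
    (x : ℕ) (hx : x ≤ p + q) :
    (glue p q l P M U x ≤ p ∧ ∃ y, y ≤ p ∧ glue p q l P M U x = M y ∧
      ((y ≤ P ∧ x = y + l) ∨ (P < y ∧ x = y + q))) ∨
    (p < glue p q l P M U x ∧ ∃ y, y ≤ q ∧ glue p q l P M U x = U y + p ∧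
      ((y < l ∧ x = y) ∨ (l < y ∧ x = y + P))) := by
  obtain ⟨hM1, hM2, -, -⟩ := hM
  obtain ⟨hU1, hU2, -, -⟩ := hU
  have key : ∀ y, y ≤ q → y ≠ l → 0 < U y := by
    intro y hy hne
    rcases Nat.eq_zero_or_pos (U y) with h | h
    · exact absurd (hU2 y l hy (by omega) (by omega)) hne
    · exact h
  unfold glue
  split_ifs with h1 h2 h3
  · right
    have := key x (by omega) (by omega)
    exact ⟨by omega, x, by omega, rfl, by omega⟩
  · left
    exact ⟨hM1 _ (by omega), x - l, by omega, rfl, by omega⟩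
  · right
    have := key (x - P) (by omega) (by omega)
    exact ⟨by omega, x - P, by omega, rfl, by omega⟩
  · left
    exact ⟨hM1 _ (by omega), x - q, by omega, rfl, by omega⟩

theorem glue_NP {p q l P : ℕ} {M U : ℕ → ℕ} (hM : NP p M) (hU : NP q U)
    (hl : l + 1 ≤ q) (hP : P ≤ p) (hU0 : U l = 0) (hU1 : U (l + 1) = q) (hMP : M P = p) :
    NP (p + q) (glue p q l P M U) := by
  have gc := glue_cases hM hU hl hP hU0
  refine ⟨?_, ?_, ?_, ?_⟩
  · intro x hx
    rcases gc x hx with ⟨h, -⟩ | ⟨h, y, hy, h2, -⟩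
    · omega
    · have := hU.1 y hy
      omega
  · intro x x' hx hx' he
    rcases gc x hx with ⟨h, y, hy, h2, h3⟩ | ⟨h, y, hy, h2, h3⟩ <;>
    rcases gc x' hx' with ⟨h', y', hy', h2', h3'⟩ | ⟨h', y', hy', h2', h3'⟩
    · have := hM.2.1 y y' hy hy' (by omega)
      omega
    · omega
    · omega
    · have := hU.2.1 y y' hy hy' (by omega)
      omega
  · intro x hx
    unfold glue
    rw [if_neg (by omega), if_neg (by omega), if_neg (by omega), if_neg (by omega)]
  · intro a b c d hab hbc hcd hd h1 h2 h3
    have ca := gc a (by omega)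
    have cb := gc b (by omega)
    have cc := gc c (by omega)
    have cd := gc d (by omega)
    have aM := hM.2.2.2
    have aU := hU.2.2.2
    generalize glue p q l P M U a = va at *
    generalize glue p q l P M U b = vb at *
    generalize glue p q l P M U c = vc at *
    generalize glue p q l P M U d = vd at *
    rcases cd with ⟨hd1, yd, hd2, hd3, hd4⟩ | ⟨hd1, yd, hd2, hd3, hd4⟩
    · rcases ca with ⟨ha1, ya, ha2, ha3, ha4⟩ | ⟨ha1, ya, ha2, ha3, ha4⟩
      on_goal 2 => omega
      rcases cb with ⟨hb1, yb, hb2, hb3, hb4⟩ | ⟨hb1, yb, hb2, hb3, hb4⟩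
      on_goal 2 => omega
      rcases cc with ⟨hc1, yc, hc2, hc3, hc4⟩ | ⟨hc1, yc, hc2, hc3, hc4⟩
      on_goal 2 => omega
      exact aM ya yb yc yd (by omega) (by omega) (by omega) (by omega) (by omega) (by omega) (by omega)
    · rcases ca with ⟨ha1, ya, ha2, ha3, ha4⟩ | ⟨ha1, ya, ha2, ha3, ha4⟩
      · rcases cb with ⟨hb1, yb, hb2, hb3, hb4⟩ | ⟨hb1, yb, hb2, hb3, hb4⟩
        · rcases cc with ⟨hc1, yc, hc2, hc3, hc4⟩ | ⟨hc1, yc, hc2, hc3, hc4⟩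
          on_goal 2 => omega
          have hbp : yb < yc := by omega
          have hcp : yc ≤ P := by omega
          have hcP : yc ≠ P := by
            rintro rfl
            omega
          have hbM := hM.1 yb hb2
          have hbP : M yb ≠ M P := by
            intro h
            have := hM.2.1 _ _ hb2 hP h
            omega
          exact aM ya yb yc P (by omega) (by omega) (by omega) (by omega) (by omega) (by omega) (by omega)
        · have hdM := hU.1 yd hd2
          have hb' : yb ≠ l + 1 := by
            rintro rfl
            omega
          rcases cc with ⟨hc1, yc, hc2, hc3, hc4⟩ | ⟨hc1, yc, hc2, hc3, hc4⟩
          · omega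
          exact aU l yb yc yd (by omega) (by omega) (by omega) (by omega) (by omega) (by omega) (by omega)
      · rcases cb with ⟨hb1, yb, hb2, hb3, hb4⟩ | ⟨hb1, yb, hb2, hb3, hb4⟩
        · omega
        rcases cc with ⟨hc1, yc, hc2, hc3, hc4⟩ | ⟨hc1, yc, hc2, hc3, hc4⟩
        · omega
        exact aU ya yb yc yd (by omega) (by omega) (by omega) (by omega) (by omega) (by omega) (by omega)

theorem thresh (B : ℕ → Prop) (a b : ℕ) (hab : a ≤ b)
    (h : ∀ x y, a ≤ x → x < y → y < b → B y → B x) :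
    ∃ l, a ≤ l ∧ l ≤ b ∧ ∀ x, a ≤ x → x < b → (B x ↔ x < l) := by
  induction b, hab using Nat.le_induction with
  | base => exact ⟨a, le_rfl, le_rfl, fun x h1 h2 => by omega⟩
  | succ b hab ih =>
    by_cases hb : B b
    · refine ⟨b + 1, by omega, le_rfl, fun x h1 h2 => ⟨fun _ => h2, fun _ => ?_⟩⟩
      rcases Nat.lt_or_ge x b with h3 | h3
      · exact h x b h1 h3 (by omega) hb
      · have : x = b := by omega
        exact this ▸ hb
    · obtain ⟨l, h1, h2, h3⟩ := ih (fun x y hx hxy hy => h x y hx hxy (by omega))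
      refine ⟨l, h1, by omega, fun x hx hxb => ?_⟩
      rcases Nat.lt_or_ge x b with h4 | h4
      · exact h3 x hx h4
      · have : x = b := by omega
        subst this
        exact ⟨fun h => absurd h hb, fun h => by omega⟩

theorem NP.count {n : ℕ} {s : ℕ → ℕ} (h : NP n s) (p : ℕ) :
    ((Finset.range (n + 1)).filter (fun x => p < s x)).card = n - p := by
  have himg : (Finset.range (n + 1)).image s = Finset.range (n + 1) := by
    apply Finset.eq_of_subset_of_card_le
    · intro y hy
      obtain ⟨x, hx, rfl⟩ := Finset.mem_image.1 hy
      have := h.1 x (by simpa [Nat.lt_succ_iff] using hx)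
      simp; omega
    · rw [Finset.card_image_of_injOn]
      intro x hx y hy hxy
      simp at hx hy
      exact h.2.1 x y (by omega) (by omega) hxy
  have h2 : ((Finset.range (n + 1)).filter (fun x => p < s x)).image s = Finset.Ioc p n := by
    ext y
    simp only [Finset.mem_image, Finset.mem_filter, Finset.mem_range, Finset.mem_Ioc]
    constructor
    · rintro ⟨x, ⟨h1, h2⟩, rfl⟩
      exact ⟨h2, h.1 x (by omega)⟩
    · rintro ⟨h1, h2⟩
      have : y ∈ (Finset.range (n + 1)).image s := by rw [himg]; simp; omega
      obtain ⟨x, hx, rfl⟩ := Finset.mem_image.1 this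
      exact ⟨x, ⟨by simpa using hx, h1⟩, rfl⟩
  have h3 := congrArg Finset.card h2
  rw [Finset.card_image_of_injOn, Nat.card_Ioc] at h3
  · exact h3
  · intro x hx y hy hxy
    simp at hx hy
    exact h.2.1 x y (by omega) (by omega) hxy

theorem split {n k : ℕ} (hk : 1 ≤ k) {z : (ℕ → ℕ) × ℕ} (hz : Q n (k + 1) z) :
    ∃ p q, p + q = n ∧ ∃ z1 z2, Q p k z1 ∧ Q q 1 z2 ∧
      z = (glue p q (q - 1 - z2.2) (p - z1.2) z1.1 z2.1, z1.2 + z2.2) := by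
  obtain ⟨s, r⟩ := z
  obtain ⟨hs, i, hi, hs0, hsn⟩ := hz
  simp only at hi hs0 hsn hs
  have hs' := hs
  obtain ⟨h1, h2, h3, h4⟩ := hs'
  obtain ⟨c, hc⟩ : ∃ c, c = i + k := ⟨_, rfl⟩
  obtain ⟨p, hp⟩ : ∃ p, p = s c := ⟨_, rfl⟩
  have hc1 : s (c + 1) = n := by rw [hc]; exact hsn
  have hpn : p < n := by
    have := h1 c (by omega)
    have h5 : s c ≠ s (c + 1) := fun h => by have := h2 _ _ (by omega) (by omega) h; omega
    omega
  have hp0 : 0 < p := by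
    have h5 : s c ≠ s i := fun h => by have := h2 _ _ (by omega) (by omega) h; omega
    omega
  have nep : ∀ x, x ≤ n → x ≠ c → s x ≠ p := fun x hx hne h =>
    hne (h2 x c hx (by omega) (by omega))
  have nen : ∀ x, x ≤ n → x ≠ c + 1 → s x < n := fun x hx hne => by
    have := h1 x hx
    have h5 : s x ≠ s (c + 1) := fun h => hne (h2 _ _ hx (by omega) h)
    omega
  have ne0 : ∀ x, x ≤ n → x ≠ i → 0 < s x := fun x hx hne => by
    have h5 : s x ≠ s i := fun h => hne (h2 _ _ hx (by omega) h)
    omega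
  obtain ⟨l, -, hlc, hl⟩ := thresh (fun x => p < s x) 0 c (by omega) (by
    intro x y _ hxy hy hB
    by_contra hx
    have := nep x (by omega) (by omega)
    have := nen y (by omega) (by omega)
    exact h4 x y c (c + 1) hxy hy (by omega) (by omega) (by omega) (by omega) (by omega))
  obtain ⟨t, htc, htn, ht⟩ := thresh (fun x => p < s x) (c + 1) (n + 1) (by omega) (by
    intro x y hx hxy hy hB
    by_contra hx'
    have := nep x (by omega) (by omega)
    have := ne0 x (by omega) (by omega)
    have : x ≠ c + 1 := by rintro rfl; omega
    exact h4 i c x y (by omega) (by omega) hxy (by omega) (by omega) (by omega) (by omega))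
  have hcard := hs.count p
  have hset : (Finset.range (n + 1)).filter (fun x => p < s x)
      = Finset.range l ∪ Finset.Ico (c + 1) t := by
    ext x
    simp only [Finset.mem_filter, Finset.mem_range, Finset.mem_union, Finset.mem_Ico]
    rcases lt_trichotomy x c with h | h | h
    · have := hl x (by omega) h
      omega
    · subst h
      omega
    · constructor
      · rintro ⟨h5, h6⟩
        exact Or.inr ⟨h, (ht x h h5).1 h6⟩
      · rintro (h5 | h5)
        · omega
        · exact ⟨by omega, (ht x h (by omega)).2 h5.2⟩
  rw [hset, Finset.card_union_of_disjoint, Finset.card_range, Nat.card_Ico] at hcard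
  swap
  · rw [Finset.disjoint_left]
    intro x hx hx'
    simp at hx hx'
    omega
  have htt : c + 1 < t := (ht (c + 1) le_rfl (by omega)).1 (by omega)
  have hli : l ≤ i := by
    by_contra h
    have := (hl i (by omega) (by omega)).2 (by omega)
    omega
  obtain ⟨q, hq⟩ : ∃ q, q = n - p := ⟨_, rfl⟩
  obtain ⟨P, hP⟩ : ∃ P, P = c - l := ⟨_, rfl⟩
  have htq : t = P + q + 1 := by omega
  have hPp : P ≤ p := by omega
  -- value facts
  have f1 : ∀ x, x < l → p < s x := fun x hx => (hl x (by omega) (by omega)).2 hx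
  have f2 : ∀ x, l ≤ x → x ≤ c → s x ≤ p := fun x hx hxc => by
    rcases Nat.lt_or_ge x c with h | h
    · by_contra h'
      have := (hl x (by omega) h).1 (by omega)
      omega
    · have : x = c := by omega
      subst this; omega
  have f3 : ∀ x, c < x → x ≤ P + q → p < s x := fun x hx hxc =>
    (ht x hx (by omega)).2 (by omega)
  have f4 : ∀ x, P + q < x → x ≤ n → s x ≤ p := fun x hx hxc => by
    by_contra h'
    have := (ht x (by omega) (by omega)).1 (by omega)
    omega
  have f5 : ∀ x, c ≤ x → x ≤ P + q → p ≤ s x := fun x hx hxc => by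
    rcases Nat.lt_or_ge c x with h | h
    · exact (f3 x h hxc).le
    · have : x = c := by omega
      subst this; omega
  obtain ⟨eM, heM⟩ : ∃ e : ℕ → ℕ, e = fun y => if y ≤ P then y + l else y + q := ⟨_, rfl⟩
  obtain ⟨eU, heU⟩ : ∃ e : ℕ → ℕ, e = fun y => if y < l then y else y + P := ⟨_, rfl⟩
  have mM : ∀ x y, x < y → eM x < eM y := by
    intro x y hxy; simp only [heM]; split_ifs <;> omega
  have mU : ∀ x y, x < y → eU x < eU y := by
    intro x y hxy; simp only [heU]; split_ifs <;> omega
  have bM : ∀ x, x ≤ p → eM x ≤ n ∧ s (eM x) ≤ p := by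
    intro x hx; simp only [heM]; split_ifs
    · exact ⟨by omega, f2 _ (by omega) (by omega)⟩
    · exact ⟨by omega, f4 _ (by omega) (by omega)⟩
  have bU : ∀ x, x ≤ q → eU x ≤ n ∧ p ≤ s (eU x) := by
    intro x hx; simp only [heU]; split_ifs with h
    · exact ⟨by omega, (f1 _ (by omega)).le⟩
    · exact ⟨by omega, f5 _ (by omega) (by omega)⟩
  refine ⟨p, q, by omega, (fun y => if y ≤ p then s (eM y) else 0, p - P),
    (fun y => if y ≤ q then s (eU y) - p else 0, q - 1 - l), ?_, ?_, ?_⟩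
  · refine ⟨⟨?_, ?_, ?_, ?_⟩, i - l, ?_, ?_, ?_⟩
    · intro x hx
      simp only [if_pos hx]
      exact (bM x hx).2
    · intro x y hx hy hxy
      simp only [if_pos hx, if_pos hy] at hxy
      have := h2 _ _ (bM x hx).1 (bM y hy).1 hxy
      rcases lt_trichotomy x y with h | h | h
      · have := mM _ _ h; omega
      · exact h
      · have := mM _ _ h; omega
    · intro x hx
      simp only [if_neg (not_le.2 hx)]
    · intro a b c d hab hbc hcd hd
      simp only [if_pos (show a ≤ p by omega), if_pos (show b ≤ p by omega),
        if_pos (show c ≤ p by omega), if_pos hd]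
      exact h4 _ _ _ _ (mM _ _ hab) (mM _ _ hbc) (mM _ _ hcd) (bM _ hd).1
    · simp only; omega
    · simp only [heM]
      rw [if_pos (by omega), if_pos (by omega), Nat.sub_add_cancel hli, hs0]
    · simp only [heM]
      rw [if_pos (by omega), if_pos (by omega), hp]
      congr 1; omega
  · refine ⟨⟨?_, ?_, ?_, ?_⟩, l, ?_, ?_, ?_⟩
    · intro x hx
      simp only [if_pos hx]
      have := h1 _ (bU x hx).1
      omega
    · intro x y hx hy hxy
      simp only [if_pos hx, if_pos hy] at hxy
      have h5 := (bU x hx).2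
      have h6 := (bU y hy).2
      have := h2 _ _ (bU x hx).1 (bU y hy).1 (by omega)
      rcases lt_trichotomy x y with h | h | h
      · have := mU _ _ h; omega
      · exact h
      · have := mU _ _ h; omega
    · intro x hx
      simp only [if_neg (not_le.2 hx)]
    · intro a b c d hab hbc hcd hd
      simp only [if_pos (show a ≤ q by omega), if_pos (show b ≤ q by omega),
        if_pos (show c ≤ q by omega), if_pos hd]
      intro g1 g2 g3
      exact h4 _ _ _ _ (mU _ _ hab) (mU _ _ hbc) (mU _ _ hcd) (bU _ hd).1
        (by omega) (by omega) (by omega)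
    · simp only; omega
    · simp only [heU]
      rw [if_pos (by omega), if_neg (by omega), show l + P = c by omega, ← hp, Nat.sub_self]
    · simp only [heU]
      rw [if_pos (by omega), if_neg (by omega), show l + 1 + P = c + 1 by omega, hc1, hq]
  · simp only
    rw [show q - 1 - (q - 1 - l) = l by omega, show p - (p - P) = P by omega]
    refine Prod.ext ?_ (by simp only; omega)
    funext x
    simp only [glue]
    split_ifs with g1 g2 g3 g4 g5 g6 g7 g8
    all_goals try omega
    · have := f1 x g1
      simp only [heU, if_pos g1]; omega
    · simp only [heM]
      rw [if_pos (by omega)]; congr 1; omega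
    · have := f3 x (by omega) (by omega)
      simp only [heU]
      rw [if_neg (by omega), show x - P + P = x by omega]; omega
    · simp only [heM]
      rw [if_neg (by omega)]; congr 1; omega
    · exact h3 x (by omega)

theorem glue_Q {p q k : ℕ} {z1 z2 : (ℕ → ℕ) × ℕ} (h1 : Q p k z1) (h2 : Q q 1 z2) :
    Q (p + q) (k + 1) (glue p q (q - 1 - z2.2) (p - z1.2) z1.1 z2.1, z1.2 + z2.2) := by
  obtain ⟨M, r1⟩ := z1
  obtain ⟨U, r2⟩ := z2
  obtain ⟨hM, i, hi, hM0, hMp⟩ := h1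
  obtain ⟨hU, l, hl, hU0, hUq⟩ := h2
  simp only at *
  rw [show q - 1 - r2 = l by omega, show p - r1 = i + k by omega]
  refine ⟨glue_NP hM hU (by omega) (by omega) hU0 hUq hMp, l + i, by simp only; omega, ?_, ?_⟩
  · simp only [glue]
    rw [if_neg (by omega), if_pos (by omega), show l + i - l = i by omega, hM0]
  · simp only [glue]
    rw [if_neg (by omega), if_neg (by omega), if_pos (by omega),
      show l + i + (k + 1) - (i + k) = l + 1 by omega, hUq, add_comm]

theorem glue_inj {p q p' q' k : ℕ} {z1 z2 z1' z2' : (ℕ → ℕ) × ℕ}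
    (h1 : Q p k z1) (h2 : Q q 1 z2) (h1' : Q p' k z1') (h2' : Q q' 1 z2')
    (hpq : p + q = p' + q')
    (hg : glue p q (q - 1 - z2.2) (p - z1.2) z1.1 z2.1 =
      glue p' q' (q' - 1 - z2'.2) (p' - z1'.2) z1'.1 z2'.1)
    (hr : z1.2 + z2.2 = z1'.2 + z2'.2) :
    p = p' ∧ q = q' ∧ z1 = z1' ∧ z2 = z2' := by
  obtain ⟨M, r1⟩ := z1
  obtain ⟨U, r2⟩ := z2
  obtain ⟨M', r1'⟩ := z1'
  obtain ⟨U', r2'⟩ := z2'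
  obtain ⟨hM, i, hi, hM0, hMp⟩ := h1
  obtain ⟨hU, l, hl, hU0, hUq⟩ := h2
  obtain ⟨hM', i', hi', hM0', hMp'⟩ := h1'
  obtain ⟨hU', l', hl', hU0', hUq'⟩ := h2'
  simp only at *
  rw [show q - 1 - r2 = l by omega, show p - r1 = i + k by omega,
    show q' - 1 - r2' = l' by omega, show p' - r1' = i' + k by omega] at hg
  have hc : l + (i + k) = l' + (i' + k) := by omega
  have hpp : p = p' := by
    have h := congrFun hg (l + (i + k))
    simp only [glue] at h
    rw [if_neg (by omega), if_pos (by omega), if_neg (by omega), if_pos (by omega),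
      Nat.add_sub_cancel_left, hMp, hc, Nat.add_sub_cancel_left, hMp'] at h
    exact h
  subst hpp
  have hqq : q = q' := by omega
  subst hqq
  have gc := glue_cases hM hU (l := l) (P := i + k) (by omega) (by omega) hU0
  have gc' := glue_cases hM' hU' (l := l') (P := i' + k) (by omega) (by omega) hU0'
  rw [← hg] at gc'
  have hll : l = l' := by
    have a1 := gc (min l l') (by omega)
    have a2 := gc' (min l l') (by omega)
    rcases a1 with ⟨u, y, hy, -, h3⟩ | ⟨u, y, hy, -, h3⟩ <;>
    rcases a2 with ⟨u', y', hy', -, h3'⟩ | ⟨u', y', hy', -, h3'⟩ <;> omega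
  subst hll
  have hii : i = i' := by omega
  subst hii
  refine ⟨rfl, rfl, ?_, ?_⟩
  · refine Prod.ext ?_ (by simp only; omega)
    funext x
    simp only
    by_cases hx : x ≤ p
    · by_cases hx2 : x ≤ i + k
      · have h := congrFun hg (x + l)
        simp only [glue] at h
        simpa [if_neg (show ¬ x + l < l by omega), if_pos (show x + l ≤ l + (i + k) by omega)]
          using h
      · have h := congrFun hg (x + q)
        simp only [glue] at h
        rw [if_neg (by omega), if_neg (by omega), if_neg (by omega), if_pos (by omega),
          if_neg (by omega), if_neg (by omega), if_neg (by omega), if_pos (by omega),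
          Nat.add_sub_cancel] at h
        exact h
    · rw [hM.2.2.1 x (by omega), hM'.2.2.1 x (by omega)]
  · refine Prod.ext ?_ (by simp only; omega)
    funext x
    simp only
    by_cases hx : x ≤ q
    · rcases lt_trichotomy x l with hx2 | hx2 | hx2
      · have h := congrFun hg x
        simp only [glue] at h
        simpa [if_pos hx2] using h
      · rw [hx2, hU0, hU0']
      · have h := congrFun hg (x + (i + k))
        simp only [glue] at h
        rw [if_neg (by omega), if_neg (by omega), if_pos (by omega),
          if_neg (by omega), if_neg (by omega), if_pos (by omega), Nat.add_sub_cancel] at h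
        omega
    · rw [hU.2.2.1 x (by omega), hU'.2.2.1 x (by omega)]

theorem finNP (n : ℕ) : {s | NP n s}.Finite := by
  apply Set.Finite.of_injOn (f := fun (s : ℕ → ℕ) (x : Fin (n + 1)) => (s x : ℕ))
    (t := Set.pi (Set.univ : Set (Fin (n + 1))) fun _ => Set.Iic n)
  · intro s hs x _
    exact hs.1 x (by omega)
  · intro s hs t ht h
    funext x
    by_cases hx : x ≤ n
    · exact congrFun h ⟨x, by omega⟩
    · rw [hs.2.2.1 x (by omega), ht.2.2.1 x (by omega)]
  · exact Set.Finite.pi fun _ => Set.finite_Iic n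

theorem finQ (n k : ℕ) : {z | Q n k z}.Finite := by
  apply Set.Finite.subset ((finNP n).prod (Set.finite_Iic n))
  rintro z ⟨h, i, hi, -⟩
  exact ⟨h, by simp; omega⟩

noncomputable def S (n k : ℕ) : Finset ((ℕ → ℕ) × ℕ) := (finQ n k).toFinset

theorem mem_S {n k : ℕ} {z : (ℕ → ℕ) × ℕ} : z ∈ S n k ↔ Q n k z := by simp [S]

theorem sum_S (n k : ℕ) (hk : 1 ≤ k) (φ : ℕ → ℚ) :
    ∑ z ∈ S n (k + 1), φ z.2 = ∑ pq ∈ Finset.HasAntidiagonal.antidiagonal n,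
      ∑ w ∈ S pq.1 k ×ˢ S pq.2 1, φ (w.1.2 + w.2.2) := by
  rw [Finset.sum_sigma']
  symm
  refine Finset.sum_bij (fun a _ => (glue a.1.1 a.1.2 (a.1.2 - 1 - a.2.2.2) (a.1.1 - a.2.1.2)
    a.2.1.1 a.2.2.1, a.2.1.2 + a.2.2.2)) ?_ ?_ ?_ ?_
  · rintro ⟨⟨p, q⟩, z1, z2⟩ h
    simp only [Finset.mem_sigma, Finset.HasAntidiagonal.mem_antidiagonal, Finset.mem_product, mem_S] at h ⊢
    obtain ⟨rfl, h1, h2⟩ := h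
    exact glue_Q h1 h2
  · rintro ⟨⟨p, q⟩, z1, z2⟩ h ⟨⟨p', q'⟩, z1', z2'⟩ h' he
    simp only [Finset.mem_sigma, Finset.HasAntidiagonal.mem_antidiagonal, Finset.mem_product, mem_S] at h h'
    obtain ⟨hn, h1, h2⟩ := h
    obtain ⟨hn', h1', h2'⟩ := h'
    have he1 := congrArg Prod.fst he
    have he2 := congrArg Prod.snd he
    obtain ⟨rfl, rfl, rfl, rfl⟩ := glue_inj h1 h2 h1' h2' (by omega) he1 he2
    rfl
  · intro z hz
    obtain ⟨p, q, hpq, z1, z2, h1, h2, h3⟩ := split hk (mem_S.1 hz)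
    refine ⟨⟨(p, q), z1, z2⟩, ?_, h3.symm⟩
    simp only [Finset.mem_sigma, Finset.HasAntidiagonal.mem_antidiagonal, Finset.mem_product, mem_S]
    exact ⟨hpq, h1, h2⟩
  · intros; rfl

noncomputable def F (k : ℕ) : PowerSeries ℚ := PowerSeries.mk fun n => ((S n k).card : ℚ)
noncomputable def G (k : ℕ) : PowerSeries ℚ := PowerSeries.mk fun n => ∑ z ∈ S n k, (z.2 : ℚ)

theorem F_succ (k : ℕ) (hk : 1 ≤ k) : F (k + 1) = F k * F 1 := by
  ext n
  have := sum_S n k hk (fun _ => 1)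
  simp only [Finset.sum_const, nsmul_eq_mul, mul_one, Finset.card_product, Nat.cast_mul] at this
  simp only [F, PowerSeries.coeff_mul, PowerSeries.coeff_mk]
  exact this

theorem G_succ (k : ℕ) (hk : 1 ≤ k) : G (k + 1) = G k * F 1 + F k * G 1 := by
  ext n
  have := sum_S n k hk (fun r => r)
  simp only [F, G, map_add, PowerSeries.coeff_mul, PowerSeries.coeff_mk]
  rw [this, ← Finset.sum_add_distrib]
  refine Finset.sum_congr rfl fun pq _ => ?_
  rw [Finset.sum_product]
  simp only [Nat.cast_add, Finset.sum_add_distrib, Finset.sum_const, nsmul_eq_mul,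
    ← Finset.mul_sum]
  ring

theorem F_eq (k : ℕ) (hk : 1 ≤ k) : F k = F 1 ^ k := by
  induction k, hk using Nat.le_induction with
  | base => simp
  | succ k hk ih => rw [F_succ k hk, ih, pow_succ]

theorem G_eq (k : ℕ) (hk : 1 ≤ k) : G k = (k : PowerSeries ℚ) * F 1 ^ (k - 1) * G 1 := by
  induction k, hk using Nat.le_induction with
  | base => simp
  | succ k hk ih =>
    rw [G_succ k hk, ih, F_eq k hk]
    obtain ⟨m, rfl⟩ : ∃ m, k = m + 1 := ⟨k - 1, by omega⟩
    simp only [Nat.add_sub_cancel]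
    push_cast
    ring

-- insertion of the minimum
def ins (z : ℕ) (n : ℕ) (s : ℕ → ℕ) : ℕ → ℕ := fun x =>
  if n + 1 < x then 0 else if x < z then s x + 1 else if x = z then 0 else s (x - 1) + 1

def Q2 (n k : ℕ) (t : ℕ → ℕ) : Prop :=
  NP (n + 1) t ∧ ∃ i z, i + k < z ∧ z ≤ n + 1 ∧ t i = 1 ∧ t (i + k) = n + 1 ∧ t z = 0

theorem finQ2 (n k : ℕ) : {t | Q2 n k t}.Finite :=
  (finNP (n + 1)).subset fun _ h => h.1

theorem ins_cases (z n : ℕ) (s : ℕ → ℕ) (hz : z ≤ n + 1) (x : ℕ) (hx : x ≤ n + 1) :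
    (x = z ∧ ins z n s x = 0) ∨
    ∃ y, y ≤ n ∧ ins z n s x = s y + 1 ∧ ((y < z ∧ x = y) ∨ (z ≤ y ∧ x = y + 1)) := by
  unfold ins
  rw [if_neg (by omega)]
  split_ifs with h1 h2
  · exact Or.inr ⟨x, by omega, rfl, by omega⟩
  · exact Or.inl ⟨h2, rfl⟩
  · exact Or.inr ⟨x - 1, by omega, rfl, by omega⟩

theorem ins_Q2 {n k r j : ℕ} {s : ℕ → ℕ} (h : Q n k (s, r)) (hj : j ≤ r) :
    Q2 n k (ins (n + 1 - j) n s) := by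
  obtain ⟨hs, i, hi, hs0, hsn⟩ := h
  simp only at *
  obtain ⟨h1, h2, h3, h4⟩ := hs
  obtain ⟨z, hz⟩ : ∃ z, z = n + 1 - j := ⟨_, rfl⟩
  rw [← hz]
  have ic := ins_cases z n s (by omega)
  refine ⟨⟨?_, ?_, ?_, ?_⟩, i, z, by omega, by omega, ?_, ?_, ?_⟩
  · intro x hx
    rcases ic x hx with ⟨-, h⟩ | ⟨y, hy, h, -⟩
    · omega
    · have := h1 y hy
      omega
  · intro x x' hx hx' he
    rcases ic x hx with ⟨h5, h⟩ | ⟨y, hy, h, h5⟩ <;>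
    rcases ic x' hx' with ⟨h5', h'⟩ | ⟨y', hy', h', h5'⟩
    · omega
    · omega
    · omega
    · have := h2 y y' hy hy' (by omega)
      omega
  · intro x hx
    simp [ins, hx]
  · intro a b c d hab hbc hcd hd g1 g2 g3
    have ca := ic a (by omega)
    have cb := ic b (by omega)
    have cc := ic c (by omega)
    have cd := ic d (by omega)
    rcases cb with ⟨-, hb⟩ | ⟨yb, hb, hb1, hb2⟩
    · omega
    rcases cc with ⟨-, hc⟩ | ⟨yc, hc, hc1, hc2⟩
    · omega
    rcases cd with ⟨-, hd⟩ | ⟨yd, hd, hd1, hd2⟩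
    · omega
    rcases ca with ⟨ha, ha1⟩ | ⟨ya, ha, ha1, ha2⟩
    · have : s yc ≠ s i := fun h => by
        have := h2 _ _ hc (by omega) h
        omega
      exact h4 i yb yc yd (by omega) (by omega) (by omega) (by omega) (by omega) (by omega) (by omega)
    · exact h4 ya yb yc yd (by omega) (by omega) (by omega) (by omega) (by omega) (by omega) (by omega)
  · simp only [ins]
    rw [if_neg (by omega), if_pos (by omega), hs0]
  · simp only [ins]
    rw [if_neg (by omega), if_pos (by omega), hsn]
  · simp only [ins]
    rw [if_neg (by omega), if_neg (by omega), if_pos (by trivial)]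

theorem ins_inj {n k r j r' j' : ℕ} {s s' : ℕ → ℕ} (h : Q n k (s, r)) (hj : j ≤ r)
    (h' : Q n k (s', r')) (hj' : j' ≤ r')
    (he : ins (n + 1 - j) n s = ins (n + 1 - j') n s') : s = s' ∧ r = r' ∧ j = j' := by
  obtain ⟨hs, i, hi, hs0, hsn⟩ := h
  obtain ⟨hs', i', hi', hs0', hsn'⟩ := h'
  simp only at *
  obtain ⟨z, hz⟩ : ∃ z, z = n + 1 - j := ⟨_, rfl⟩
  obtain ⟨z', hz'⟩ : ∃ z, z = n + 1 - j' := ⟨_, rfl⟩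
  rw [← hz, ← hz'] at he
  have hzz : z = z' := by
    have e := congrFun he z
    simp only [ins] at e
    rw [if_neg (by omega), if_neg (by omega), if_pos (by trivial), if_neg (by omega)] at e
    split_ifs at e with h1 h2
    · omega
  subst hzz
  have hss : s = s' := by
    funext x
    by_cases hx : x ≤ n
    · by_cases hxz : x < z
      · have e := congrFun he x
        simp only [ins] at e
        rw [if_neg (by omega), if_pos hxz, if_neg (by omega), if_pos hxz] at e
        omega
      · have e := congrFun he (x + 1)
        simp only [ins] at e
        rw [if_neg (by omega), if_neg (by omega), if_neg (by omega), if_neg (by omega),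
          if_neg (by omega), if_neg (by omega), Nat.add_sub_cancel] at e
        omega
    · rw [hs.2.2.1 x (by omega), hs'.2.2.1 x (by omega)]
  subst hss
  have := hs.2.1 i i' (by omega) (by omega) (by omega)
  exact ⟨rfl, by omega, by omega⟩

theorem ins_surj {n k : ℕ} {t : ℕ → ℕ} (h : Q2 n k t) :
    ∃ s r j, Q n k (s, r) ∧ j ≤ r ∧ ins (n + 1 - j) n s = t := by
  obtain ⟨⟨h1, h2, h3, h4⟩, i, z, hiz, hz, ti, tk, tz⟩ := h
  obtain ⟨e, he⟩ : ∃ e : ℕ → ℕ, e = fun x => if x < z then x else x + 1 := ⟨_, rfl⟩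
  have em : ∀ x y, x < y → e x < e y := by
    intro x y hxy; simp only [he]; split_ifs <;> omega
  have eb : ∀ x, x ≤ n → e x ≤ n + 1 := by
    intro x hx; simp only [he]; split_ifs <;> omega
  have ep : ∀ x, x ≤ n → 0 < t (e x) := by
    intro x hx
    have : t (e x) ≠ t z := fun h => by
      have := h2 _ _ (eb x hx) hz h
      simp only [he] at this
      split_ifs at this <;> omega
    omega
  refine ⟨fun x => if x ≤ n then t (e x) - 1 else 0, n - k - i, n + 1 - z, ⟨⟨?_, ?_, ?_, ?_⟩,
    i, ?_, ?_, ?_⟩, by omega, ?_⟩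
  · intro x hx
    simp only [if_pos hx]
    have := h1 _ (eb x hx)
    omega
  · intro x y hx hy hxy
    simp only [if_pos hx, if_pos hy] at hxy
    have := ep x hx
    have := ep y hy
    have := h2 _ _ (eb x hx) (eb y hy) (by omega)
    rcases lt_trichotomy x y with h | h | h
    · have := em _ _ h; omega
    · exact h
    · have := em _ _ h; omega
  · intro x hx
    simp only [if_neg (not_le.2 hx)]
  · intro a b c d hab hbc hcd hd
    simp only [if_pos (show a ≤ n by omega), if_pos (show b ≤ n by omega),
        if_pos (show c ≤ n by omega), if_pos hd]
    intro g1 g2 g3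
    exact h4 _ _ _ _ (em _ _ hab) (em _ _ hbc) (em _ _ hcd) (eb _ hd)
        (by omega) (by omega) (by omega)
  · simp only; omega
  · simp only [he]
    rw [if_pos (by omega), if_pos (by omega), ti]
  · simp only [he]
    rw [if_pos (by omega), if_pos (by omega), tk]
    omega
  · rw [show n + 1 - (n + 1 - z) = z by omega]
    funext x
    simp only [ins]
    split_ifs with g1 g2 g3 g4 g5
    all_goals try omega
    · exact (h3 x g1).symm
    · have := ep x g3
      simp only [he, if_pos g2] at this ⊢
      omega
    · rw [g4, tz]
    · have := ep (x - 1) g5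
      simp only [he] at this ⊢
      rw [if_neg (by omega), show x - 1 + 1 = x by omega] at this ⊢
      omega

theorem card_Q2 (n k : ℕ) : {t | Q2 n k t}.ncard = ∑ z ∈ S n k, (z.2 + 1) := by
  rw [Set.ncard_eq_toFinset_card _ (finQ2 n k)]
  have : ∑ z ∈ S n k, (z.2 + 1) = ((S n k).sigma fun z => Finset.range (z.2 + 1)).card := by
    simp [Finset.card_sigma]
  rw [this]
  symm
  refine Finset.card_bij (fun a _ => ins (n + 1 - a.2) n a.1.1) ?_ ?_ ?_
  · rintro ⟨⟨s, r⟩, j⟩ h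
    simp only [Finset.mem_sigma, mem_S, Finset.mem_range] at h
    simpa using ins_Q2 h.1 (by omega)
  · rintro ⟨⟨s, r⟩, j⟩ h ⟨⟨s', r'⟩, j'⟩ h' he
    simp only [Finset.mem_sigma, mem_S, Finset.mem_range] at h h' he
    obtain ⟨rfl, rfl, rfl⟩ := ins_inj h.1 (by omega) h'.1 (by omega) he
    rfl
  · intro t ht
    obtain ⟨s, r, j, h1, h2, h3⟩ := ins_surj (by simpa using ht)
    refine ⟨⟨⟨s, r⟩, j⟩, ?_, h3⟩
    simp only [Finset.mem_sigma, mem_S, Finset.mem_range]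
    exact ⟨h1, by omega⟩

-- bridge
def E (n : ℕ) (σ : Equiv.Perm (Fin (n + 1))) : ℕ → ℕ := fun x =>
  if h : x < n + 1 then (σ ⟨x, h⟩ : ℕ) else 0

theorem E_fin (n : ℕ) (σ : Equiv.Perm (Fin (n + 1))) (x : Fin (n + 1)) : E n σ x = σ x := by
  simp only [E]
  rw [dif_pos x.isLt]

theorem E_inj (n : ℕ) : Function.Injective (E n) := by
  intro σ τ h
  ext x
  rw [← E_fin, ← E_fin, h]

theorem E_NP (n : ℕ) (σ : Equiv.Perm (Fin (n + 1))) : NP n (E n σ) ↔ Avoids1324 σ := by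
  constructor
  · rintro h ⟨a, b, c, d, h1, h2, h3, h4, h5, h6⟩
    refine h.2.2.2 a b c d h1 h2 h3 (by omega) ?_ ?_ ?_ <;> rw [E_fin, E_fin] <;> assumption
  · intro h
    refine ⟨?_, ?_, ?_, ?_⟩
    · intro x hx
      have := E_fin n σ ⟨x, by omega⟩
      simp only at this
      omega
    · intro x y hx hy he
      have h1 := E_fin n σ ⟨x, by omega⟩
      have h2 := E_fin n σ ⟨y, by omega⟩
      simp only at h1 h2
      have := σ.injective (Fin.ext (by omega : (σ ⟨x, by omega⟩ : ℕ) = σ ⟨y, by omega⟩))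
      simpa using this
    · intro x hx
      simp only [E]
      rw [dif_neg (by omega)]
    · intro a b c d h1 h2 h3 h4 h5 h6 h7
      have ea := E_fin n σ ⟨a, by omega⟩
      have eb := E_fin n σ ⟨b, by omega⟩
      have ec := E_fin n σ ⟨c, by omega⟩
      have ed := E_fin n σ ⟨d, by omega⟩
      simp only at ea eb ec ed
      rw [ea, ec] at h5
      rw [eb, ec] at h6
      rw [eb, ed] at h7
      exact h ⟨⟨a, by omega⟩, ⟨b, by omega⟩, ⟨c, by omega⟩, ⟨d, by omega⟩, h1, h2, h3, h5, h6, h7⟩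

theorem E_surj (n : ℕ) {s : ℕ → ℕ} (h : NP n s) : ∃ σ, E n σ = s := by
  have hb : Function.Bijective (fun x : Fin (n + 1) =>
      (⟨s x, by have := h.1 x (by omega); omega⟩ : Fin (n + 1))) := by
    rw [← Finite.injective_iff_bijective]
    intro x y hxy
    have := h.2.1 x y (by omega) (by omega) (by simpa using hxy)
    exact Fin.ext this
  refine ⟨Equiv.ofBijective _ hb, ?_⟩
  funext x
  simp only [E]
  split_ifs with hx
  · simp
  · exact (h.2.2.1 x (by omega)).symm

theorem bridge (n : ℕ) (A : Set (ℕ → ℕ)) (B : Set (Equiv.Perm (Fin (n + 1))))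
    (hA : ∀ s ∈ A, NP n s) (hB : ∀ σ, σ ∈ B ↔ E n σ ∈ A) : B.ncard = A.ncard := by
  rw [← Set.ncard_image_of_injective B (E_inj n)]
  congr 1
  ext s
  constructor
  · rintro ⟨σ, h, rfl⟩
    exact (hB σ).1 h
  · intro h
    obtain ⟨σ, rfl⟩ := E_surj n (hA s h)
    exact ⟨σ, (hB σ).2 h, rfl⟩

theorem E_symm (n : ℕ) (σ : Equiv.Perm (Fin (n + 1))) (v : Fin (n + 1)) :
    E n σ (σ.symm v) = v := by
  rw [E_fin]; simp

theorem E_pos (n : ℕ) (σ : Equiv.Perm (Fin (n + 1))) (v : Fin (n + 1)) (x : ℕ) (hx : x ≤ n)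
    (h : E n σ x = v) : (σ.symm v : ℕ) = x := by
  have h1 := E_fin n σ ⟨x, by omega⟩
  simp only at h1
  have : v = σ ⟨x, by omega⟩ := Fin.ext (by omega)
  rw [this]; simp

theorem card_S (n k : ℕ) : (SPerm (n + 1) 1 k).ncard = (S n k).card := by
  have : (S n k).card = {s | ∃ r, Q n k (s, r)}.ncard := by
    rw [← Set.ncard_coe_finset]
    have h2 : {s | ∃ r, Q n k (s, r)} = Prod.fst '' (S n k : Set ((ℕ → ℕ) × ℕ)) := by
      ext s
      simp [mem_S]
    rw [h2, Set.InjOn.ncard_image]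
    rintro ⟨s, r⟩ h ⟨s', r'⟩ h' he
    simp only [Finset.mem_coe, mem_S] at h h' he
    subst he
    obtain ⟨hs, i, hi, hs0, hsn⟩ := h
    obtain ⟨hs', i', hi', hs0', hsn'⟩ := h'
    simp only at *
    have := hs.2.1 i i' (by omega) (by omega) (by omega)
    exact Prod.ext rfl (by simp only; omega)
  rw [this]
  apply bridge
  · rintro s ⟨r, h, -⟩
    exact h
  · intro σ
    constructor
    · rintro ⟨hav, hn, ha, h1, -⟩
      have e1 := E_symm n σ ⟨n + 1 - 1, hn⟩
      have e2 := E_symm n σ ⟨1 - 1, ha⟩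
      rw [h1] at e1
      have := (σ.symm ⟨n + 1 - 1, hn⟩).isLt
      refine ⟨n - k - (σ.symm ⟨1 - 1, ha⟩ : ℕ), (E_NP n σ).2 hav, (σ.symm ⟨1 - 1, ha⟩ : ℕ), ?_, ?_, ?_⟩
      · simp only; omega
      · exact e2
      · exact e1
    · rintro ⟨r, hs, i, hi, h0, hn⟩
      simp only at *
      refine ⟨(E_NP n σ).1 hs, by omega, by omega, ?_, ?_⟩
      · rw [E_pos n σ ⟨n + 1 - 1, by omega⟩ (i + k) (by omega) hn,
          E_pos n σ ⟨1 - 1, by omega⟩ i (by omega) (by simpa using h0)]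
      · intro b hb
        omega

theorem card_S2 (n k : ℕ) : (SPerm (n + 2) 2 k).ncard = ∑ z ∈ S n k, (z.2 + 1) := by
  rw [← card_Q2]
  apply bridge (n + 1)
  · rintro s ⟨h, -⟩
    exact h
  · intro σ
    constructor
    · rintro ⟨hav, hn, ha, h1, h2⟩
      have e1 := E_symm (n + 1) σ ⟨n + 2 - 1, hn⟩
      have e2 := E_symm (n + 1) σ ⟨2 - 1, ha⟩
      have e3 := E_symm (n + 1) σ 0
      have h3 : ((σ.symm ⟨n + 2 - 1, hn⟩ : Fin (n + 2)) : ℕ) < (σ.symm 0 : Fin (n + 2)) :=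
        h2 0 (by simp)
      have := (σ.symm 0).isLt
      rw [h1] at e1 h3
      exact ⟨(E_NP (n + 1) σ).2 hav, (σ.symm ⟨2 - 1, ha⟩ : ℕ), (σ.symm 0 : Fin (n + 2)),
        h3, by omega, e2, e1, e3⟩
    · rintro ⟨hs, i, z, hiz, hz, ti, tk, tz⟩
      refine ⟨(E_NP (n + 1) σ).1 hs, by omega, by omega, ?_, ?_⟩
      · rw [E_pos (n + 1) σ ⟨n + 2 - 1, by omega⟩ (i + k) (by omega) tk,
          E_pos (n + 1) σ ⟨2 - 1, by omega⟩ i (by omega) (by simpa using ti)]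
      · intro b hb
        have hb0 : b = 0 := Fin.ext (by simp only [Fin.val_zero]; omega)
        subst hb0
        rw [Fin.lt_def, E_pos (n + 1) σ ⟨n + 2 - 1, by omega⟩ (i + k) (by omega) tk,
          E_pos (n + 1) σ 0 z (by omega) (by simpa using tz)]
        exact hiz

theorem f_eq : (PowerSeries.mk fun n => if n = 0 then 0 else ((SPerm (n + 1) 1 1).ncard : ℚ))
    = F 1 := by
  ext n
  simp only [F, PowerSeries.coeff_mk]
  split_ifs with h
  · subst h
    have : S 0 1 = ∅ := by
      ext z
      simp only [mem_S, Finset.notMem_empty, iff_false]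
      rintro ⟨-, i, hi, -⟩
      omega
    simp [this]
  · rw [card_S]

theorem T_eq (k : ℕ) :
    (PowerSeries.mk fun n => if n = 0 then 0 else ((SPerm n 2 k).ncard : ℚ)) =
      (F k + G k) * PowerSeries.X ^ 2 := by
  ext n
  rw [PowerSeries.coeff_mul_X_pow', PowerSeries.coeff_mk]
  match n with
  | 0 => simp
  | 1 =>
    have : SPerm 1 2 k = ∅ := by
      ext σ
      simp only [Set.mem_empty_iff_false, iff_false]
      rintro ⟨-, -, ha, -⟩
      omega
    simp [this]
  | n + 2 =>
    rw [if_neg (by omega), if_pos (by omega), card_S2, Nat.add_sub_cancel]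
    simp [F, G, Finset.sum_add_distrib, add_comm]

end Pf

/-- in `ℚ⟦x⟧`, with `f = Σ_{n≥1} a_{n+1,1} xⁿ`, `T_{2,0} = x²`, and
`T_{2,j} = Σ_{n≥1} b_{n,j} xⁿ` for `j ≥ 1`, for every `k ≥ 2` we have
`T_{2,k} = f^k T_{2,0} + k f^{k-1} (T_{2,1} - f T_{2,0})`. -/
theorem stmt_11 (k : ℕ) (hk : 2 ≤ k) :
    (PowerSeries.mk fun n => if n = 0 then 0 else ((SPerm n 2 k).ncard : ℚ)) =
      (PowerSeries.mk fun n => if n = 0 then 0 else ((SPerm (n + 1) 1 1).ncard : ℚ)) ^ k *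
        PowerSeries.X ^ 2 +
      (k : PowerSeries ℚ) *
        (PowerSeries.mk fun n => if n = 0 then 0 else ((SPerm (n + 1) 1 1).ncard : ℚ)) ^ (k - 1) *
        ((PowerSeries.mk fun n => if n = 0 then 0 else ((SPerm n 2 1).ncard : ℚ)) -
          (PowerSeries.mk fun n => if n = 0 then 0 else ((SPerm (n + 1) 1 1).ncard : ℚ)) *
            PowerSeries.X ^ 2) := by
  rw [Pf.f_eq, Pf.T_eq, Pf.T_eq, Pf.F_eq k (by omega), Pf.G_eq k (by omega)]
  ring
end

section
/- Let n ≥ 3 and k ≥ 1, and let a_{n,k} = |S_{n,k}^{1≺n}(1324)|. The number of permutations σ ∈ S_{n,k}^{2≺n}(1324) whose last entry is 1 (i.e., σ(n) = 1) equals a_{n−1,k}. Explicitly, the map sending σ ∈ S_{n−1,k}^{1≺n−1}(1324) to the permutation of {1,…,n} whose one-line notation is obtained from σ by increasing every entry by 1 and appending the entry 1 at the end is a bijection onto this set. -/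
/-- One-line notation of a permutation, as a list of 1-based values. -/
def word {n : ℕ} (σ : Equiv.Perm (Fin n)) : List ℕ :=
  List.ofFn fun i => (σ i : ℕ) + 1

def appendOne {m : ℕ} (σ : Equiv.Perm (Fin m)) : Equiv.Perm (Fin (m + 1)) :=
  (finSuccEquivLast.trans (Equiv.optionCongr σ)).trans (finSuccEquiv m).symm

theorem appendOne_castSucc {m : ℕ} (σ : Equiv.Perm (Fin m)) (i : Fin m) :
    appendOne σ i.castSucc = (σ i).succ := by
  simp [appendOne]

theorem appendOne_last {m : ℕ} (σ : Equiv.Perm (Fin m)) :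
    appendOne σ (Fin.last m) = 0 := by
  simp [appendOne]

theorem appendOne_symm_succ {m : ℕ} (σ : Equiv.Perm (Fin m)) (i : Fin m) :
    (appendOne σ).symm i.succ = (σ.symm i).castSucc := by
  rw [Equiv.symm_apply_eq, appendOne_castSucc]; simp

theorem appendOne_symm_zero {m : ℕ} (σ : Equiv.Perm (Fin m)) :
    (appendOne σ).symm 0 = Fin.last m := by
  rw [Equiv.symm_apply_eq, appendOne_last]

theorem appendOne_avoids {m : ℕ} (σ : Equiv.Perm (Fin m)) :
    Avoids1324 (appendOne σ) ↔ Avoids1324 σ := by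
  unfold Avoids1324
  refine not_congr ⟨?_, ?_⟩
  · rintro ⟨i, j, k, l, h1, h2, h3, h4, h5, h6⟩
    induction l using Fin.lastCases with
    | last => rw [appendOne_last] at h6; exact absurd h6 (Fin.not_lt_zero _)
    | cast l =>
      have hk : k ≠ Fin.last m := (h3.trans (Fin.castSucc_lt_last l)).ne
      have hj : j ≠ Fin.last m := (h2.trans (h3.trans (Fin.castSucc_lt_last l))).ne
      have hi : i ≠ Fin.last m := (h1.trans (h2.trans (h3.trans (Fin.castSucc_lt_last l)))).ne
      obtain ⟨k, rfl⟩ := Fin.exists_castSucc_eq.2 hk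
      obtain ⟨j, rfl⟩ := Fin.exists_castSucc_eq.2 hj
      obtain ⟨i, rfl⟩ := Fin.exists_castSucc_eq.2 hi
      simp only [appendOne_castSucc, Fin.succ_lt_succ_iff, Fin.castSucc_lt_castSucc_iff] at *
      exact ⟨i, j, k, l, h1, h2, h3, h4, h5, h6⟩
  · rintro ⟨i, j, k, l, h⟩
    refine ⟨i.castSucc, j.castSucc, k.castSucc, l.castSucc, ?_⟩
    simpa only [appendOne_castSucc, Fin.succ_lt_succ_iff, Fin.castSucc_lt_castSucc_iff] using h

theorem appendOne_mem {m k : ℕ} (hm : 2 ≤ m) (σ : Equiv.Perm (Fin m)) :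
    appendOne σ ∈ SPerm (m + 1) 2 k ↔ σ ∈ SPerm m 1 k := by
  have e1 : ∀ h : m + 1 - 1 < m + 1, (⟨m + 1 - 1, h⟩ : Fin (m + 1)) =
      Fin.succ ⟨m - 1, by omega⟩ := fun h => by ext; simp; omega
  have e2 : ∀ h : 2 - 1 < m + 1, (⟨2 - 1, h⟩ : Fin (m + 1)) =
      Fin.succ ⟨1 - 1, by omega⟩ := fun h => by ext; simp
  simp only [SPerm, Set.mem_ofPred_eq, appendOne_avoids, e1, e2, appendOne_symm_succ,
    Fin.val_castSucc]
  refine and_congr_right fun _ => ⟨?_, ?_⟩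
  · rintro ⟨_, _, h, _⟩
    exact ⟨by omega, by omega, h, fun b hb => by omega⟩
  · rintro ⟨_, _, h, _⟩
    refine ⟨by omega, by omega, h, fun b hb => ?_⟩
    have : b = 0 := Fin.ext (show (b : ℕ) = 0 by omega)
    rw [this, appendOne_symm_zero]
    exact Fin.castSucc_lt_last _

theorem appendOne_inj {m : ℕ} : Function.Injective (appendOne (m := m)) := by
  intro σ τ h
  ext i
  have := congrArg (fun f => f i.castSucc) h
  simp only [appendOne_castSucc, Fin.succ_inj] at this
  rw [this]

theorem appendOne_surj {m : ℕ} (τ : Equiv.Perm (Fin (m + 1))) (h : τ (Fin.last m) = 0) :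
    ∃ σ, appendOne σ = τ := by
  have h0 : ∀ i : Fin m, τ i.castSucc ≠ 0 := fun i hi =>
    (Fin.castSucc_lt_last i).ne (τ.injective (hi.trans h.symm))
  have hinj : Function.Injective fun i : Fin m => (τ i.castSucc).pred (h0 i) := by
    intro i j hij
    simpa using hij
  refine ⟨Equiv.ofBijective _ (Finite.injective_iff_bijective.1 hinj), ?_⟩
  refine Equiv.ext fun i => ?_
  induction i using Fin.lastCases with
  | last => rw [appendOne_last, h]
  | cast i => rw [appendOne_castSucc]; simp

theorem appendOne_word {m : ℕ} (σ : Equiv.Perm (Fin m)) :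
    word (appendOne σ) = (word σ).map (· + 1) ++ [1] := by
  unfold word
  rw [List.ofFn_succ', List.concat_eq_append, List.map_ofFn]
  simp only [appendOne_castSucc, appendOne_last]
  rfl

theorem appendOne_bijOn {m k : ℕ} (hm : 2 ≤ m) :
    Set.BijOn appendOne (SPerm m 1 k)
      {τ : Equiv.Perm (Fin (m + 1)) | τ ∈ SPerm (m + 1) 2 k ∧ τ (Fin.last m) = 0} := by
  refine ⟨fun σ hσ => ⟨(appendOne_mem hm σ).2 hσ, appendOne_last σ⟩,
    appendOne_inj.injOn, ?_⟩
  rintro τ ⟨h1, h2⟩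
  obtain ⟨σ, rfl⟩ := appendOne_surj τ h2
  exact ⟨σ, (appendOne_mem hm σ).1 h1, rfl⟩

/-- for `n ≥ 3` and `k ≥ 1`, the permutations in `S_{n,k}^{2≺n}(1324)`
ending with the entry `1` are counted by `a_{n-1,k}`; explicitly, the map sending
`σ ∈ S_{n-1,k}^{1≺n-1}(1324)` to the permutation whose one-line notation is that of
`σ` with every entry increased by 1 followed by a final entry `1`, is a bijection
onto that set. -/
theorem stmt_12 (n k : ℕ) (hn : 3 ≤ n) (hk : 1 ≤ k) :
    {τ : Equiv.Perm (Fin n) | τ ∈ SPerm n 2 k ∧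
        τ ⟨n - 1, by omega⟩ = ⟨0, by omega⟩}.ncard = (SPerm (n - 1) 1 k).ncard ∧
    ∃ F : Equiv.Perm (Fin (n - 1)) → Equiv.Perm (Fin n),
      (∀ σ, word (F σ) = (word σ).map (· + 1) ++ [1]) ∧
      Set.BijOn F (SPerm (n - 1) 1 k)
        {τ : Equiv.Perm (Fin n) | τ ∈ SPerm n 2 k ∧
          τ ⟨n - 1, by omega⟩ = ⟨0, by omega⟩} := by
  obtain ⟨m, rfl⟩ : ∃ m, n = m + 1 := ⟨n - 1, by omega⟩
  have hb := appendOne_bijOn (m := m) (k := k) (by omega)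
  refine ⟨?_, appendOne, appendOne_word, hb⟩
  have h2 := Set.ncard_image_of_injective (SPerm m 1 k) (appendOne_inj (m := m))
  rw [hb.image_eq] at h2
  exact h2
end

section
/- Let σ be a permutation of {1,…,n} avoiding 1324, with p = σ⁻¹(1), q = σ⁻¹(n), and p + 1 < q (so there is at least one entry strictly between the 1 and the n). Let m = min{ σ(r) : p < r < q }. Then: (i) there are no indices i < j < p with σ(i) < m < σ(j); and (ii) there are no indices i, j with q < i < j ≤ n and σ(i) < m < σ(j). -/
/-- let `σ` avoid 1324, with `p` the position of the entry `1`, `q` the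
position of the entry `n`, and `p + 1 < q`.  Let `m` be the least value occurring
strictly between positions `p` and `q`.  Then (i) no two positions `i < j` before `p`
have `σ i < m < σ j`, and (ii) no two positions `i < j` after `q` have `σ i < m < σ j`. -/
theorem stmt_17 (n : ℕ) (hn : 1 ≤ n) (σ : Equiv.Perm (Fin n))
    (havoid : Avoids1324 σ) (m : Fin n)
    (hpq : ((σ.symm ⟨0, by omega⟩ : Fin n) : ℕ) + 1 < ((σ.symm ⟨n - 1, by omega⟩ : Fin n) : ℕ))
    (hm : IsLeast {v : Fin n | ∃ r : Fin n,
      σ.symm ⟨0, by omega⟩ < r ∧ r < σ.symm ⟨n - 1, by omega⟩ ∧ σ r = v} m) :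
    (¬ ∃ i j : Fin n, i < j ∧ j < σ.symm ⟨0, by omega⟩ ∧ σ i < m ∧ m < σ j) ∧
    (¬ ∃ i j : Fin n, σ.symm ⟨n - 1, by omega⟩ < i ∧ i < j ∧ σ i < m ∧ m < σ j) := by
  obtain ⟨⟨r, hpr, hrq, hr⟩, -⟩ := hm
  constructor
  · rintro ⟨i, j, hij, hjp, him, hmj⟩
    refine havoid ⟨i, j, r, σ.symm ⟨n - 1, by omega⟩, hij, hjp.trans hpr, hrq, hr ▸ him, hr ▸ hmj, ?_⟩
    rw [Equiv.apply_symm_apply]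
    refine lt_of_le_of_ne (Fin.le_def.2 (by have := (σ j).2; simp only; omega)) ?_
    intro h
    have h2 := (Equiv.eq_symm_apply σ).2 h
    exact absurd ((hjp.trans hpr).trans hrq) (by rw [← h2]; exact lt_irrefl _)
  · rintro ⟨i, j, hqi, hij, him, hmj⟩
    refine havoid ⟨σ.symm ⟨0, by omega⟩, r, i, j, hpr, hrq.trans hqi, hij, ?_, hr ▸ him, hr ▸ hmj⟩
    rw [Equiv.apply_symm_apply]
    refine lt_of_le_of_ne (Fin.le_def.2 (Nat.zero_le _)) ?_
    intro h
    have h2 := (Equiv.eq_symm_apply σ).2 h.symm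
    exact absurd ((hpr.trans hrq).trans hqi) (by rw [← h2]; exact lt_irrefl _)
end
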